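/- For all positive integers n and k, the following identity holds as formal power series in q: q^{k(k+1)(6n+8k+1)/6} · Σ_{π∈RPP(δ_{n+2k+1}/δ_n)} q^{|π|} = det( E*_{2i+2j̄+1}(q)/(q;q)_{2i+2j̄+1} )_{i,j=1}^{n+k}, where j̄ = j−n−1 if j > n and j̄ = −j if j ≤ n, and where by convention an entry with 2i+2j̄+1 < 0 equals 0. -/

import Mathlib

open Finset

attribute [local instance 10] Classical.propDecidable

noncomputable section

namespace Paper

/-! ### Words and permutation statistics (all words are 1-based). -/

/-- The word (one-line notation, 1-based) of a permutation of `{1, …, N}`: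
`word π i = π(i)` for `1 ≤ i ≤ N`, and `0` otherwise. -/
def word {N : ℕ} (π : Equiv.Perm (Fin N)) (i : ℕ) : ℕ :=
  if h : 1 ≤ i ∧ i ≤ N then (π ⟨i - 1, by omega⟩ : ℕ) + 1 else 0

/-- The major index of a word of length `N`: the sum of the descents. -/
def majW (N : ℕ) (w : ℕ → ℕ) : ℕ :=
  ∑ i ∈ Finset.Icc 1 (N - 1), if w (i + 1) < w i then i else 0

/-- The number of inversions of a word of length `N`. -/
def invW (N : ℕ) (w : ℕ → ℕ) : ℕ :=
  (((Finset.Icc 1 N) ×ˢ (Finset.Icc 1 N)).filter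
    fun p => p.1 < p.2 ∧ w p.2 < w p.1).card

/-- The number of descents of a word of length `m`. -/
def desW (m : ℕ) (w : ℕ → ℕ) : ℕ :=
  ((Finset.Icc 1 (m - 1)).filter fun i => w (i + 1) < w i).card

/-- The number of ascents of a word of length `m`. -/
def ascW (m : ℕ) (w : ℕ → ℕ) : ℕ :=
  ((Finset.Icc 1 (m - 1)).filter fun i => w i < w (i + 1)).card

/-- The number of non-descents of a word of length `m`. -/
def ndesW (m : ℕ) (w : ℕ → ℕ) : ℕ :=
  ((Finset.Icc 1 m).filter fun i => i = m ∨ w i < w (i + 1)).card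

/-- The number of non-ascents of a word of length `m`. -/
def nascW (m : ℕ) (w : ℕ → ℕ) : ℕ :=
  ((Finset.Icc 1 m).filter fun i => i = m ∨ ¬ w i < w (i + 1)).card

/-- `π_e = π₂π₄⋯`, the subword of even-position entries, as a 1-based word. -/
def evenWord {N : ℕ} (π : Equiv.Perm (Fin N)) (j : ℕ) : ℕ := word π (2 * j)

/-- `π_o = π₁π₃⋯`, the subword of odd-position entries, as a 1-based word. -/
def oddWord {N : ℕ} (π : Equiv.Perm (Fin N)) (j : ℕ) : ℕ := word π (2 * j - 1)

/-- A word of length `N` is alternating: `w₁ < w₂ > w₃ < w₄ > ⋯`. -/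
def IsAltW (N : ℕ) (w : ℕ → ℕ) : Prop :=
  ∀ i ∈ Finset.Icc 1 (N - 1), (i % 2 = 1 → w i < w (i + 1)) ∧ (i % 2 = 0 → w (i + 1) < w i)

/-- A word of length `N` is reverse alternating: `w₁ > w₂ < w₃ > w₄ < ⋯`. -/
def IsRaltW (N : ℕ) (w : ℕ → ℕ) : Prop :=
  ∀ i ∈ Finset.Icc 1 (N - 1), (i % 2 = 1 → w (i + 1) < w i) ∧ (i % 2 = 0 → w i < w (i + 1))

/-- `Alt_N`, the set of alternating permutations of `{1, …, N}`. -/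
def altPerms (N : ℕ) : Finset (Equiv.Perm (Fin N)) :=
  Finset.univ.filter fun π => IsAltW N (word π)

/-- `Ralt_N`, the set of reverse alternating permutations of `{1, …, N}`. -/
def raltPerms (N : ℕ) : Finset (Equiv.Perm (Fin N)) :=
  Finset.univ.filter fun π => IsRaltW N (word π)

/-- `κ_N = (1)(2,3)(4,5)⋯`, acting on the 1-based values `{1, …, N}`. -/
def kappaNat (N j : ℕ) : ℕ :=
  if j % 2 = 0 ∧ 2 ≤ j ∧ j + 1 ≤ N then j + 1
  else if j % 2 = 1 ∧ 3 ≤ j ∧ j ≤ N then j - 1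
  else j

/-- `η_N = (1,2)(3,4)⋯`, acting on the 1-based values `{1, …, N}`. -/
def etaNat (N j : ℕ) : ℕ :=
  if j % 2 = 1 ∧ j + 1 ≤ N then j + 1
  else if j % 2 = 0 ∧ 2 ≤ j ∧ j ≤ N then j - 1
  else j

/-- `maj(π⁻¹)`. -/
def majInv (N : ℕ) (π : Equiv.Perm (Fin N)) : ℕ := majW N (word π.symm)

/-- `maj(κ_N π⁻¹)`. -/
def majKappaInv (N : ℕ) (π : Equiv.Perm (Fin N)) : ℕ :=
  majW N fun i => kappaNat N (word π.symm i)

/-- `maj(η_N π⁻¹)`. -/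
def majEtaInv (N : ℕ) (π : Equiv.Perm (Fin N)) : ℕ :=
  majW N fun i => etaNat N (word π.symm i)

/-- The reversal permutation `i ↦ N + 1 - i` of `Fin N`. -/
def revPerm (N : ℕ) : Equiv.Perm (Fin N) :=
  ⟨Fin.rev, Fin.rev, fun i => Fin.rev_rev i, fun i => Fin.rev_rev i⟩

/-- `φ(π)ᵢ = (N+1) - π_{N+1-i}`. -/
def phiMap {N : ℕ} (π : Equiv.Perm (Fin N)) : Equiv.Perm (Fin N) :=
  ((revPerm N).trans π).trans (revPerm N)

/-! ### Lattice paths.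

A path with `L` unit steps is encoded by `s : Fin L → Bool` (`true` = up-step `(1,1)`,
`false` = down-step `(1,-1)`). -/

/-- The vertical displacement of the `j`-th step. -/
def stepVal {L : ℕ} (s : Fin L → Bool) (j : ℕ) : ℤ :=
  if h : j < L then (if s ⟨j, h⟩ then 1 else -1) else 0

/-- The height of the path after `i` steps. -/
def pht {L : ℕ} (s : Fin L → Bool) (i : ℕ) : ℤ := ∑ j ∈ Finset.range i, stepVal s j

/-- A Dyck path: stays (weakly) above the `x`-axis and ends at height `0`. -/
def IsDyck {L : ℕ} (s : Fin L → Bool) : Prop :=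
  (∀ i ∈ Finset.range (L + 1), 0 ≤ pht s i) ∧ pht s L = 0

/-- The Dyck paths with `L` steps. -/
def dyckPaths (L : ℕ) : Finset (Fin L → Bool) := Finset.univ.filter fun s => IsDyck s

/-- The (indices of the) valleys of a path: a down-step followed by an up-step. -/
def valleys {L : ℕ} (s : Fin L → Bool) : Finset ℕ :=
  (Finset.Icc 1 (L - 1)).filter fun i => stepVal s (i - 1) = -1 ∧ stepVal s i = 1

/-- The (indices of the) peaks of a path: an up-step followed by a down-step. -/
def peaks {L : ℕ} (s : Fin L → Bool) : Finset ℕ :=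
  (Finset.Icc 1 (L - 1)).filter fun i => stepVal s (i - 1) = 1 ∧ stepVal s i = -1

/-- The (indices of the) high peaks of a path: peaks of height at least `2`. -/
def highPeaks {L : ℕ} (s : Fin L → Bool) : Finset ℕ :=
  (peaks s).filter fun i => 2 ≤ pht s i

/-- The height over abscissa `x` of a path starting at `(-m, 0)`. -/
def aht (m : ℕ) {L : ℕ} (s : Fin L → Bool) (x : ℤ) : ℤ := pht s (x + m).toNat

/-- `D₁ < D₂`, for `D₁` starting at `(-m₁,0)` and `D₂` at `(-m₂,0)`, `m₁ ≤ m₂`: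
strictly below on the common range of abscissas. -/
def PathLT (m₁ m₂ : ℕ) {L₁ L₂ : ℕ} (s₁ : Fin L₁ → Bool) (s₂ : Fin L₂ → Bool) : Prop :=
  ∀ x ∈ Finset.Icc (-(m₁ : ℤ)) (m₁ : ℤ), aht m₁ s₁ x < aht m₂ s₂ x

/-- `D₁ ≤ D₂`: weakly below, sharing no step. -/
def PathLE (m₁ m₂ : ℕ) {L₁ L₂ : ℕ} (s₁ : Fin L₁ → Bool) (s₂ : Fin L₂ → Bool) : Prop :=
  (∀ x ∈ Finset.Icc (-(m₁ : ℤ)) (m₁ : ℤ), aht m₁ s₁ x ≤ aht m₂ s₂ x) ∧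
    ∀ x ∈ Finset.Icc (-(m₁ : ℤ)) ((m₁ : ℤ) - 1),
      ¬(aht m₁ s₁ x = aht m₂ s₂ x ∧ aht m₁ s₁ (x + 1) = aht m₂ s₂ (x + 1))

/-- The abscissas of the common lattice points of two paths. -/
def interPts (m₁ m₂ : ℕ) {L₁ L₂ : ℕ} (s₁ : Fin L₁ → Bool) (s₂ : Fin L₂ → Bool) : Finset ℤ :=
  (Finset.Icc (-(m₁ : ℤ)) (m₁ : ℤ)).filter fun x => aht m₁ s₁ x = aht m₂ s₂ x

/-- `Dyck^k_{2n}`: tuples `(D₁, …, D_k)` with `D_i ∈ Dyck((-n-2i+2,0) → (n+2i-2,0))`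
(0-based: `D_i` has half-length `n + 2i`). -/
abbrev DyckTuple (n k : ℕ) := ∀ i : Fin k, Fin (2 * (n + 2 * (i : ℕ))) → Bool

/-- The tuples `(D₁ ≤ D₂ ≤ ⋯ ≤ D_k) ∈ Dyck^k_{2n}`. -/
def weakTuples (n k : ℕ) : Finset (DyckTuple n k) :=
  Finset.univ.filter fun D =>
    (∀ i : Fin k, IsDyck (D i)) ∧
      ∀ (i : ℕ) (h : i + 1 < k),
        PathLE (n + 2 * i) (n + 2 * (i + 1)) (D ⟨i, by omega⟩) (D ⟨i + 1, h⟩)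

/-- The tuples `(D₁ < D₂ < ⋯ < D_k) ∈ Dyck^k_{2n}`. -/
def strictTuples (n k : ℕ) : Finset (DyckTuple n k) :=
  Finset.univ.filter fun D =>
    (∀ i : Fin k, IsDyck (D i)) ∧
      ∀ (i : ℕ) (h : i + 1 < k),
        PathLT (n + 2 * i) (n + 2 * (i + 1)) (D ⟨i, by omega⟩) (D ⟨i + 1, h⟩)

/-- The lattice points of a path starting at `(-m, 0)`, as a finite subset of `ℤ × ℤ`. -/
def pathPoints (m : ℕ) {L : ℕ} (s : Fin L → Bool) : Finset (ℤ × ℤ) :=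
  (Finset.range (L + 1)).image fun t : ℕ => (-(m : ℤ) + (t : ℤ), pht s t)

/-- The non-valley lattice points of a path starting at `(-m, 0)`. -/
def nonValleyPoints (m : ℕ) {L : ℕ} (s : Fin L → Bool) : Finset (ℤ × ℤ) :=
  ((Finset.range (L + 1)).filter fun t => t ∉ valleys s).image
    fun t : ℕ => (-(m : ℤ) + (t : ℤ), pht s t)

section Weights

variable {F : Type*} [Field F]

/-- The `i`-th lattice point (in `ℤ × ℕ`) of a path starting at `(a, 0)`. -/
def ptOf (a : ℤ) {L : ℕ} (s : Fin L → Bool) (i : ℕ) : ℤ × ℕ := (a + i, (pht s i).toNat)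

/-- `wt_V(D) = ∏_{p ∈ D} wt(p) · ∏_{p ∈ V(D)} w̃t(p)` for a path starting at `(a, 0)`. -/
def wtVal (wt wte : ℤ × ℕ → F) (a : ℤ) {L : ℕ} (s : Fin L → Bool) : F :=
  (∏ i ∈ Finset.range (L + 1), wt (ptOf a s i)) * ∏ i ∈ valleys s, wte (ptOf a s i)

/-- `wt_HP(D) = ∏_{p ∈ D} wt(p) · ∏_{p ∈ HP(D)} w̃t(p)` for a path starting at `(a, 0)`. -/
def wtHigh (wt wte : ℤ × ℕ → F) (a : ℤ) {L : ℕ} (s : Fin L → Bool) : F :=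
  (∏ i ∈ Finset.range (L + 1), wt (ptOf a s i)) * ∏ i ∈ highPeaks s, wte (ptOf a s i)

/-- `∏_{p ∈ D₁ ∩ D₂} f(p)`, for `D₁` starting at `(-m₁,0)` and `D₂` at `(-m₂,0)`. -/
def interProd (f : ℤ × ℕ → F) (m₁ m₂ : ℕ) {L₁ L₂ : ℕ}
    (s₁ : Fin L₁ → Bool) (s₂ : Fin L₂ → Bool) : F :=
  ∏ x ∈ interPts m₁ m₂ s₁ s₂, f (x, (aht m₁ s₁ x).toNat)

/-- The sum over `(D₁ ≤ ⋯ ≤ D_k) ∈ Dyck^k_{2n}` of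
`wt_V(D₁)⋯wt_V(D_k) ∏_{i=1}^{k-1} ∏_{p ∈ D_i ∩ D_{i+1}} (1 - w̃t(p)⁻¹)`. -/
def weakSum (wt wte : ℤ × ℕ → F) (n k : ℕ) : F :=
  ∑ D ∈ weakTuples n k,
    (∏ i : Fin k, wtVal wt wte (-(n : ℤ) - 2 * (i : ℕ)) (D i)) *
      ∏ j : Fin (k - 1),
        interProd (fun p => 1 - (wte p)⁻¹) (n + 2 * (j : ℕ)) (n + 2 * ((j : ℕ) + 1))
          (D ⟨(j : ℕ), by have := j.isLt; omega⟩)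
          (D ⟨(j : ℕ) + 1, by have := j.isLt; omega⟩)

/-- The sum over `(D₁ < ⋯ < D_k) ∈ Dyck^k_{2n}` of `wt_V(D₁)⋯wt_V(D_k)`. -/
def strictSum (wt wte : ℤ × ℕ → F) (n k : ℕ) : F :=
  ∑ D ∈ strictTuples n k, ∏ i : Fin k, wtVal wt wte (-(n : ℤ) - 2 * (i : ℕ)) (D i)

end Weights

/-! ### Schröder paths.

A path with `L` steps is encoded by `st : Fin L → Fin 3`
(`0` = up-step `(1,1)`, `1` = down-step `(1,-1)`, `2` = horizontal step `(2,0)`). -/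

/-- The horizontal displacement of the `j`-th step. -/
def stepX {L : ℕ} (st : Fin L → Fin 3) (j : ℕ) : ℕ :=
  if h : j < L then (if st ⟨j, h⟩ = 2 then 2 else 1) else 0

/-- The vertical displacement of the `j`-th step. -/
def stepY {L : ℕ} (st : Fin L → Fin 3) (j : ℕ) : ℤ :=
  if h : j < L then (if st ⟨j, h⟩ = 0 then 1 else if st ⟨j, h⟩ = 1 then -1 else 0) else 0

/-- The horizontal position (relative to the start) after `j` steps. -/
def xpos {L : ℕ} (st : Fin L → Fin 3) (j : ℕ) : ℕ := ∑ t ∈ Finset.range j, stepX st t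

/-- The height after `j` steps. -/
def ypos {L : ℕ} (st : Fin L → Fin 3) (j : ℕ) : ℤ := ∑ t ∈ Finset.range j, stepY st t

/-- A (little) Schröder path of horizontal span `2m`: nonnegative heights, ends at
height `0`, and no horizontal step on the `x`-axis. -/
def IsSch (m : ℕ) {L : ℕ} (st : Fin L → Fin 3) : Prop :=
  xpos st L = 2 * m ∧ (∀ j ∈ Finset.range (L + 1), 0 ≤ ypos st j) ∧ ypos st L = 0 ∧
    ∀ j ∈ Finset.range L, stepX st j = 2 → ypos st j ≠ 0

/-- The height of a Schröder path over the relative abscissa `x` (midpoints of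
horizontal steps get the height of that horizontal step). -/
def schHeight {L : ℕ} (st : Fin L → Fin 3) (x : ℕ) : ℤ :=
  ∑ t ∈ Finset.range L, if xpos st (t + 1) ≤ x then stepY st t else 0

/-- The relative abscissa `x` is the midpoint of a horizontal step. -/
def IsHMid {L : ℕ} (st : Fin L → Fin 3) (x : ℕ) : Prop :=
  ∃ j ∈ Finset.range L, stepX st j = 2 ∧ xpos st j + 1 = x

/-- The number of horizontal steps of a Schröder path. -/
def hsCount {L : ℕ} (st : Fin L → Fin 3) : ℕ :=
  ((Finset.range L).filter fun j => stepX st j = 2).card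

/-- `wt_Sch(c, S) = c^{hs(S)} ∏_{p ∈ S} wt(p)` for a Schröder path starting at `(a,0)`. -/
def wtSch {F : Type*} [Field F] (wt : ℤ × ℕ → F) (c : F) (a : ℤ) {L : ℕ}
    (st : Fin L → Fin 3) : F :=
  c ^ hsCount st * ∏ j ∈ Finset.range (L + 1), wt (a + xpos st j, (ypos st j).toNat)

/-- `φ_V(S) = D`: the Dyck path `D` (with `L'` steps) is obtained from the Schröder
path `S` by replacing each horizontal step by a down-step followed by an up-step. -/
def PhiVEq {L L' : ℕ} (st : Fin L → Fin 3) (s : Fin L' → Bool) : Prop :=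
  ∀ x ∈ Finset.range (L' + 1),
    pht s x = schHeight st x - (if IsHMid st x then 1 else 0)

/-- `φ_HP(S) = D`: the Dyck path `D` is obtained from the Schröder path `S` by
replacing each horizontal step by an up-step followed by a down-step. -/
def PhiHPEq {L L' : ℕ} (st : Fin L → Fin 3) (s : Fin L' → Bool) : Prop :=
  ∀ x ∈ Finset.range (L' + 1),
    pht s x = schHeight st x + (if IsHMid st x then 1 else 0)

/-! ### Young diagrams, excited and pleasant diagrams, reverse plane partitions. -/

/-- The cells (1-based, matrix coordinates) of the staircase `δ_m = (m-1, m-2, …, 1)`. -/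
def deltaCells (m : ℕ) : Finset (ℕ × ℕ) :=
  ((Finset.Icc 1 m) ×ˢ (Finset.Icc 1 m)).filter fun c => c.1 + c.2 ≤ m

/-- An excited move inside the Young diagram `lam`. -/
def ExcitedStep (lam : Finset (ℕ × ℕ)) (D D' : Finset (ℕ × ℕ)) : Prop :=
  ∃ i j : ℕ, (i, j) ∈ D ∧ (i + 1, j) ∉ D ∧ (i, j + 1) ∉ D ∧ (i + 1, j + 1) ∉ D ∧
    (i + 1, j + 1) ∈ lam ∧ D' = insert (i + 1, j + 1) (D.erase (i, j))

/-- `D` is an excited diagram of `lam/mu`. -/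
def IsExcited (lam mu D : Finset (ℕ × ℕ)) : Prop :=
  Relation.ReflTransGen (ExcitedStep lam) mu D

/-- `P` is a pleasant diagram of `lam/mu`: a subset of `lam \ D` for an excited diagram `D`. -/
def IsPleasant (lam mu : Finset (ℕ × ℕ)) (P : Finset (ℕ × ℕ)) : Prop :=
  ∃ D, IsExcited lam mu D ∧ P ⊆ lam \ D

/-- `p(lam/mu)`, the number of pleasant diagrams of `lam/mu`. -/
def pleasantCount (lam mu : Finset (ℕ × ℕ)) : ℕ :=
  Set.ncard {P : Finset (ℕ × ℕ) | IsPleasant lam mu P}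

/-- A reverse plane partition on the skew shape `shape`: a filling by nonnegative
integers (vanishing off the shape) weakly increasing along rows and columns. -/
def IsRPP (shape : Finset (ℕ × ℕ)) (f : ℕ × ℕ → ℕ) : Prop :=
  (∀ c, c ∉ shape → f c = 0) ∧
    (∀ i j : ℕ, (i, j) ∈ shape → (i, j + 1) ∈ shape → f (i, j) ≤ f (i, j + 1)) ∧
    ∀ i j : ℕ, (i, j) ∈ shape → (i + 1, j) ∈ shape → f (i, j) ≤ f (i + 1, j)

/-- `∑_{π ∈ RPP(shape)} q^{|π|}` as a formal power series in `q`. -/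
def rppGF (shape : Finset (ℕ × ℕ)) : PowerSeries ℚ :=
  PowerSeries.mk fun N =>
    (Set.ncard {f : ℕ × ℕ → ℕ | IsRPP shape f ∧ ∑ c ∈ shape, f c = N} : ℚ)

/-- `(q; q)_m = ∏_{i=1}^m (1 - q^i)` as a formal power series. -/
def pochPS (m : ℕ) : PowerSeries ℚ :=
  ∏ i ∈ Finset.Icc 1 m, (1 - (PowerSeries.X : PowerSeries ℚ) ^ i)

/-- `E*_N(q) = ∑_{π ∈ Alt_N} q^{maj(κ_N π⁻¹)}` as a formal power series. -/
def EstarPS (N : ℕ) : PowerSeries ℚ :=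
  ∑ π ∈ altPerms N, (PowerSeries.X : PowerSeries ℚ) ^ majKappaInv N π

/-- `E*_m(q)/(q;q)_m` for `m ≥ 0`, and `0` for `m < 0`. -/
def EstarEntry (m : ℤ) : PowerSeries ℚ :=
  if m < 0 then 0 else EstarPS m.toNat * (pochPS m.toNat)⁻¹

/-- The Gaussian binomial coefficient `[N choose M]_q` as a formal power series. -/
def gaussPS (N M : ℕ) : PowerSeries ℚ :=
  pochPS N * (pochPS M * pochPS (N - M))⁻¹

section Determinants

variable {R : Type*} [CommRing R]

theorem det_sum_rows {N : ℕ} (A : Fin N → Finset ℕ) (g : Fin N → ℕ → Fin N → R) :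
    (Matrix.of fun i j => ∑ a ∈ A i, g i a j).det =
      ∑ f ∈ Fintype.piFinset A, (Matrix.of fun i j => g i (f i) j).det := by
  have h := (Matrix.detRowAlternating (n := Fin N) (R := R)).toMultilinearMap.map_sum_finset
    (fun i a => g i a) A
  have hA : (Matrix.of fun i j => ∑ a ∈ A i, g i a j) = fun i => ∑ a ∈ A i, g i a := by
    ext i j
    simp [Finset.sum_apply]
  rw [hA]
  exact h

theorem det_eq_of_eq_add_mul_of_lower {N : ℕ} (A B L : Matrix (Fin N) (Fin N) R)
    (hL : ∀ i j, i ≤ j → L i j = 0) (h : A = B + L * A) : A.det = B.det := by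
  have h1 : (1 - L) * A = B := by
    rw [sub_mul, one_mul]
    exact sub_eq_of_eq_add h
  have h2 : (1 - L).det = 1 := by
    rw [Matrix.det_of_isLowerTriangular]
    · simp [hL]
    · intro i j hij
      have hij' : i < j := hij
      simp [hL i j hij'.le, hij'.ne]
  rw [← h1, Matrix.det_mul, h2, one_mul]

theorem det_eq_of_eq_add_mul_of_upper {N : ℕ} (A B L : Matrix (Fin N) (Fin N) R)
    (hL : ∀ i j, j ≤ i → L i j = 0) (h : A = B + L * A) : A.det = B.det := by
  have h1 : (1 - L) * A = B := by
    rw [sub_mul, one_mul]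
    exact sub_eq_of_eq_add h
  have h2 : (1 - L).det = 1 := by
    rw [Matrix.det_of_isUpperTriangular]
    · simp [hL]
    · intro i j hij
      have hij' : j < i := hij
      simp [hL i j hij'.le, hij'.ne']
  rw [← h1, Matrix.det_mul, h2, one_mul]

/-- Adding a vector supported off the columns of the other rows: if row `s` of `A` is
`v + e_s`, and column `s` vanishes in every other row and in `v`, then `v` can be dropped. -/
theorem det_eq_of_unit_row {N : ℕ} (A B : Matrix (Fin N) (Fin N) R) (s : Fin N)
    (hrow : ∀ i, i ≠ s → ∀ j, A i j = B i j) (hcol : ∀ i, i ≠ s → A i s = 0)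
    (hA : A s s = 1) (hB : ∀ j, B s j = if j = s then 1 else 0) : A.det = B.det := by
  have hAB : A = B.updateRow s (B s + fun j => A s j - B s j) := by
    ext i j
    by_cases hi : i = s
    · subst hi; simp
    · simp [Matrix.updateRow_ne hi, hrow i hi]
  rw [hAB, Matrix.det_updateRow_add, Matrix.updateRow_eq_self]
  have hz : (B.updateRow s fun j => A s j - B s j).det = 0 := by
    apply Matrix.det_eq_zero_of_column_eq_zero s
    intro i
    by_cases hi : i = s
    · subst hi; simp [hA, hB]
    · rw [Matrix.updateRow_ne hi, ← hrow i hi, hcol i hi]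
  rw [hz, add_zero]

end Determinants

section Paths

variable {R : Type*} [CommRing R]

/-- The truncated generating function of the zigzag paths that are born at corner `r`, whose last
corner is `s - 1`, and whose last value is at least `y`; all values are smaller than `M`. -/
def pathGF (q : R) (M : ℕ) : ℕ → ℕ → ℕ → R
  | 0, _, _ => 0
  | s + 1, r, y => ∑ a ∈ Finset.Ico y M, q ^ a *
      ((if r = s then 1 else 0) + ∑ b ∈ Finset.range (a + 1), q ^ b * pathGF q M s r b)

theorem pathGF_succ (q : R) (M s r y : ℕ) :
    pathGF q M (s + 1) r y = ∑ a ∈ Finset.Ico y M, q ^ a *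
      ((if r = s then 1 else 0) + ∑ b ∈ Finset.range (a + 1), q ^ b * pathGF q M s r b) := rfl

theorem pathGF_eq_zero (q : R) (M : ℕ) {s r : ℕ} (h : s ≤ r) (y : ℕ) :
    pathGF q M s r y = 0 := by
  induction s generalizing y with
  | zero => rfl
  | succ s ih =>
    rw [pathGF_succ]
    refine Finset.sum_eq_zero fun a _ => ?_
    rw [if_neg (by omega), Finset.sum_eq_zero fun b _ => by rw [ih (by omega), mul_zero]]
    simp

theorem pathGF_succ_succ (q : R) (M s r y : ℕ) :
    pathGF q M (s + 1) (r + 1) y = pathGF q M s r y := by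
  induction s generalizing y with
  | zero => exact pathGF_eq_zero q M (by omega) y
  | succ s ih =>
    rw [pathGF_succ, pathGF_succ]
    simp only [ih, add_left_inj]

theorem pathGF_add (q : R) (M m r y : ℕ) :
    pathGF q M (m + r) r y = pathGF q M m 0 y := by
  induction r with
  | zero => rfl
  | succ r ih => rw [← add_assoc, pathGF_succ_succ, ih]

/-- One more than the last corner of the path `ρ`. -/
def killTime (n k ρ : ℕ) : ℕ := if ρ < k then n + 2 * k - ρ else ρ + 1

/-- The path `ρ` visits the corner `s`. -/
def Alive (n k s ρ : ℕ) : Prop := ρ ≤ s ∧ s < killTime n k ρ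

/-- The path `ρ` visits the inner position between the corners `s - 1` and `s`. -/
def Inner (n k s ρ : ℕ) : Prop := ρ < s ∧ s < killTime n k ρ

/-- At the corner `s`, the path `ρ` is the one directly above the path `ρ'`. -/
def Above (n k s ρ ρ' : ℕ) : Prop :=
  Alive n k s ρ ∧ Alive n k s ρ' ∧ ρ' ≠ 0 ∧ ρ = min ρ' k - 1

/-- The transition matrix after `s` rounds, when the current positions are `y`. -/
def stateMat (q : R) (M n k s : ℕ) (y : Fin (n + k) → ℕ) :
    Matrix (Fin (n + k)) (Fin (n + k)) R :=
  Matrix.of fun ρ r => if s ≤ (ρ : ℕ) then (if r = ρ then 1 else 0) else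
    pathGF q M (min s (killTime n k ρ)) r (y ρ)

/-- The admissible corner values at the corner `s`, followed by the inner values `y`. -/
def cornerSet (M n k s : ℕ) (y : Fin (n + k) → ℕ) : Finset (Fin (n + k) → ℕ) :=
  (Fintype.piFinset fun _ => Finset.range M).filter fun a =>
    (∀ ρ : Fin (n + k), ¬ Alive n k s ρ → a ρ = 0) ∧
    (∀ ρ : Fin (n + k), Alive n k s ρ → y ρ ≤ a ρ) ∧
    ∀ ρ ρ' : Fin (n + k), Above n k s ρ ρ' → a ρ' < y ρ

/-- The admissible inner values before the corner `s`, when the values at that corner are `a`. -/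
def innerSet (M n k s : ℕ) (a : Fin (n + k) → ℕ) : Finset (Fin (n + k) → ℕ) :=
  (Fintype.piFinset fun _ => Finset.range M).filter fun b =>
    (∀ ρ : Fin (n + k), ¬ Inner n k s ρ → b ρ = 0) ∧
    (∀ ρ : Fin (n + k), Inner n k s ρ → b ρ ≤ a ρ) ∧
    ∀ ρ ρ' : Fin (n + k), Above n k s ρ ρ' → a ρ' < b ρ

/-- The positions `y` are compatible with the state after the corner `s`. -/
def Compat (M n k s : ℕ) (y : Fin (n + k) → ℕ) : Prop :=
  (∀ ρ : Fin (n + k), killTime n k ρ ≤ s → y ρ = 0) ∧ (∀ ρ, y ρ < M) ∧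
    ∀ ρ ρ' : Fin (n + k), Above n k s ρ ρ' → y ρ' ≤ y ρ

theorem Above.lt {n k s ρ ρ' : ℕ} (h : Above n k s ρ ρ') : ρ < ρ' := by
  obtain ⟨-, -, h1, h2⟩ := h
  omega

theorem Above.inner {n k s ρ ρ' : ℕ} (h : Above n k s ρ ρ') : Inner n k s ρ :=
  ⟨lt_of_lt_of_le h.lt h.2.1.1, h.1.2⟩

theorem Above.unique_left {n k s ρ₁ ρ₂ ρ' : ℕ} (h₁ : Above n k s ρ₁ ρ') (h₂ : Above n k s ρ₂ ρ') :
    ρ₁ = ρ₂ := h₁.2.2.2.trans h₂.2.2.2.symm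

theorem Above.unique_right {n k s ρ ρ₁ ρ₂ : ℕ} (h₁ : Above n k s ρ ρ₁) (h₂ : Above n k s ρ ρ₂) :
    ρ₁ = ρ₂ := by
  obtain ⟨⟨-, -⟩, ⟨h1, h2⟩, h3, h4⟩ := h₁
  obtain ⟨⟨-, -⟩, ⟨h5, h6⟩, h7, h8⟩ := h₂
  unfold killTime at *
  split_ifs at * <;> omega

end Paths

section Rounds

variable {R : Type*} [CommRing R] {n k : ℕ}

theorem lt_killTime (ρ : Fin (n + k)) : (ρ : ℕ) < killTime n k ρ := by
  have := ρ.isLt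
  unfold killTime
  split_ifs <;> omega

theorem sum_ite_mul_of_unique {N : ℕ} (P : Fin N → Prop) (f : Fin N → R) (j : Fin N) (hj : P j)
    (hP : ∀ i, P i → i = j) : ∑ i, (if P i then 1 else 0) * f i = f j := by
  rw [Finset.sum_eq_single j]
  · simp [hj]
  · intro i _ hi
    rw [if_neg fun h => hi (hP i h), zero_mul]
  · simp

theorem sum_ite_mul_of_forall_not {N : ℕ} (P : Fin N → Prop) (f : Fin N → R)
    (hP : ∀ i, ¬ P i) : ∑ i, (if P i then 1 else 0) * f i = 0 :=
  Finset.sum_eq_zero fun i _ => by rw [if_neg (hP i), zero_mul]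

/-- The intermediate transition matrix when the values at the corner `s` are `a`. -/
def cornerMat (q : R) (M n k s : ℕ) (a : Fin (n + k) → ℕ) :
    Matrix (Fin (n + k)) (Fin (n + k)) R :=
  Matrix.of fun ρ r => if Alive n k s ρ then
    (if (r : ℕ) = s then 1 else 0) + ∑ b ∈ Finset.range (a ρ + 1), q ^ b * pathGF q M s r b
    else stateMat q M n k s 0 ρ r

theorem det_stateMat_succ_eq_sum_corner (q : R) {M s : ℕ} (y : Fin (n + k) → ℕ)
    (hy : Compat M n k s y) :
    (stateMat q M n k (s + 1) y).det =
      ∑ a ∈ cornerSet M n k s y, q ^ (∑ ρ, a ρ) * (cornerMat q M n k s a).det := by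
  obtain ⟨hy0, hyM, hyA⟩ := hy
  let ub : Fin (n + k) → ℕ := fun ρ =>
    if h : ∃ ρ' : Fin (n + k), Above n k s ρ' ρ then y h.choose else M
  have hub : ∀ ρ ρ' : Fin (n + k), Above n k s ρ' ρ → ub ρ = y ρ' := by
    intro ρ ρ' h
    have hex : ∃ ρ' : Fin (n + k), Above n k s ρ' ρ := ⟨ρ', h⟩
    simp only [ub, dif_pos hex]
    congr 1
    exact Fin.ext (hex.choose_spec.unique_left h)
  have hubM : ∀ ρ : Fin (n + k), (¬ ∃ ρ' : Fin (n + k), Above n k s ρ' ρ) → ub ρ = M := by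
    intro ρ h
    simp only [ub, dif_neg h]
  have hubM' : ∀ ρ : Fin (n + k), ub ρ ≤ M := by
    intro ρ
    by_cases h : ∃ ρ' : Fin (n + k), Above n k s ρ' ρ
    · obtain ⟨ρ', h⟩ := h
      rw [hub _ _ h]
      exact (hyM ρ').le
    · exact (hubM ρ h).le
  let c : Fin (n + k) → ℕ → R := fun r a => q ^ a * ((if (r : ℕ) = s then 1 else 0) +
    ∑ b ∈ Finset.range (a + 1), q ^ b * pathGF q M s r b)
  let A : Fin (n + k) → Finset ℕ := fun ρ =>
    if Alive n k s ρ then Finset.Ico (y ρ) (ub ρ) else {0}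
  let g : Fin (n + k) → ℕ → Fin (n + k) → R := fun ρ a r =>
    if Alive n k s ρ then c r a else stateMat q M n k s 0 ρ r
  have hset : Fintype.piFinset A = cornerSet M n k s y := by
    ext a
    simp only [Fintype.mem_piFinset, cornerSet, Finset.mem_filter, Finset.mem_range]
    constructor
    · intro h
      have h1 : ∀ ρ : Fin (n + k), Alive n k s ρ → y ρ ≤ a ρ ∧ a ρ < ub ρ := by
        intro ρ hρ
        have := h ρ
        simpa only [A, if_pos hρ, Finset.mem_Ico] using this
      have h2 : ∀ ρ : Fin (n + k), ¬ Alive n k s ρ → a ρ = 0 := by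
        intro ρ hρ
        have := h ρ
        simpa only [A, if_neg hρ, Finset.mem_singleton] using this
      refine ⟨fun ρ => ?_, h2, fun ρ hρ => (h1 ρ hρ).1, fun ρ ρ' hρ => ?_⟩
      · by_cases hρ : Alive n k s ρ
        · exact lt_of_lt_of_le (h1 ρ hρ).2 (hubM' ρ)
        · rw [h2 ρ hρ]
          exact lt_of_le_of_lt (Nat.zero_le _) (hyM ρ)
      · rw [← hub _ _ hρ]
        exact (h1 ρ' hρ.2.1).2
    · rintro ⟨h1, h2, h3, h4⟩ ρ
      by_cases hρ : Alive n k s ρ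
      · simp only [A, if_pos hρ, Finset.mem_Ico]
        refine ⟨h3 ρ hρ, ?_⟩
        by_cases h : ∃ ρ' : Fin (n + k), Above n k s ρ' ρ
        · obtain ⟨ρ', h⟩ := h
          rw [hub _ _ h]
          exact h4 _ _ h
        · rw [hubM ρ h]
          exact h1 ρ
      · simp only [A, if_neg hρ, Finset.mem_singleton]
        exact h2 ρ hρ
  have hstate : ∀ ρ r : Fin (n + k), stateMat q M n k (s + 1) y ρ r =
      if Alive n k s ρ then ∑ a ∈ Finset.Ico (y ρ) M, c r a else stateMat q M n k s 0 ρ r := by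
    intro ρ r
    by_cases hρ : Alive n k s ρ
    · rw [if_pos hρ]
      have h1 := hρ.1
      have h2 := hρ.2
      simp only [stateMat, Matrix.of_apply]
      rw [if_neg (by omega), min_eq_left (by omega), pathGF_succ]
    · rw [if_neg hρ]
      have hlt := lt_killTime ρ
      simp only [stateMat, Matrix.of_apply]
      by_cases h1 : (ρ : ℕ) ≤ s
      · have h2 : killTime n k ρ ≤ s := by
          by_contra h
          exact hρ ⟨h1, by omega⟩
        rw [if_neg (by omega), if_neg (by omega), min_eq_right (by omega), min_eq_right (by omega),
          hy0 ρ h2, Pi.zero_apply]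
      · rw [if_pos (show s + 1 ≤ (ρ : ℕ) by omega), if_pos (show s ≤ (ρ : ℕ) by omega)]
  have hdet : (stateMat q M n k (s + 1) y).det =
      (Matrix.of fun ρ r => ∑ a ∈ A ρ, g ρ a r).det := by
    apply det_eq_of_eq_add_mul_of_lower _ _
      (Matrix.of fun i j : Fin (n + k) => if Above n k s j i then (1 : R) else 0)
    · intro i j hij
      rw [Matrix.of_apply, if_neg]
      intro h
      have := h.lt
      have : (i : ℕ) ≤ j := hij
      omega
    · ext ρ r
      rw [Matrix.add_apply, Matrix.mul_apply, Matrix.of_apply]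
      simp only [Matrix.of_apply]
      by_cases h : ∃ ρ' : Fin (n + k), Above n k s ρ' ρ
      · obtain ⟨ρ', h⟩ := h
        rw [sum_ite_mul_of_unique (fun j : Fin (n + k) => Above n k s j ρ)
          (fun j => stateMat q M n k (s + 1) y j r) ρ' h
          (fun i hi => Fin.ext (hi.unique_left h)), hstate, hstate, if_pos h.1, if_pos h.2.1]
        simp only [A, g, if_pos h.2.1, hub _ _ h]
        rw [Finset.sum_Ico_consecutive _ (hyA _ _ h) (hyM _).le]
      · rw [sum_ite_mul_of_forall_not _ _ (fun i hi => h ⟨i, hi⟩), add_zero, hstate]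
        by_cases hρ : Alive n k s ρ
        · simp only [A, g, if_pos hρ, hubM ρ h]
        · simp only [A, g, if_neg hρ, Finset.sum_singleton]
  rw [hdet, det_sum_rows, hset]
  refine Finset.sum_congr rfl fun a ha => ?_
  have ha0 : ∀ ρ : Fin (n + k), ¬ Alive n k s ρ → a ρ = 0 := (Finset.mem_filter.1 ha).2.1
  rw [← Finset.prod_pow_eq_pow_sum, ← Matrix.det_mul_column]
  congr 1
  ext ρ r
  simp only [Matrix.of_apply, g, c, cornerMat]
  by_cases hρ : Alive n k s ρ
  · simp only [if_pos hρ]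
  · simp only [if_neg hρ, ha0 ρ hρ, pow_zero, one_mul]

theorem exists_below_of_alive {s : ℕ} (hs : s < n + k) (ρ : Fin (n + k)) (hρ : Alive n k s ρ)
    (h0 : (ρ : ℕ) ≠ s) : ∃ ρ' : Fin (n + k), Above n k s ρ ρ' := by
  have := ρ.isLt
  obtain ⟨h1, h2⟩ := hρ
  have hρk : (ρ : ℕ) < k := by
    by_contra hcon
    simp only [killTime, if_neg hcon] at h2
    omega
  by_cases h : (ρ : ℕ) + 1 < k
  · refine ⟨⟨ρ + 1, by omega⟩, ⟨h1, h2⟩, ⟨?_, ?_⟩, ?_, ?_⟩ <;> simp only [killTime] at * <;>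
      split_ifs at * <;> omega
  · refine ⟨⟨s, hs⟩, ⟨h1, h2⟩, ⟨?_, ?_⟩, ?_, ?_⟩ <;> simp only [killTime] at * <;>
      split_ifs at * <;> omega

theorem det_cornerMat_eq_sum_inner (q : R) {M s : ℕ} (a y : Fin (n + k) → ℕ)
    (ha : a ∈ cornerSet M n k s y) :
    (cornerMat q M n k s a).det =
      ∑ b ∈ innerSet M n k s a, q ^ (∑ ρ, b ρ) * (stateMat q M n k s b).det := by
  simp only [cornerSet, Finset.mem_filter, Fintype.mem_piFinset, Finset.mem_range] at ha
  obtain ⟨haM, ha0, hay, haA⟩ := ha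
  have hlow : ∀ ρ ρ' : Fin (n + k), Above n k s ρ ρ' → a ρ' < a ρ := fun ρ ρ' h =>
    lt_of_lt_of_le (haA ρ ρ' h) (hay ρ h.1)
  let lb : Fin (n + k) → ℕ := fun ρ =>
    if h : ∃ ρ' : Fin (n + k), Above n k s ρ ρ' then a h.choose + 1 else 0
  have hlb : ∀ ρ ρ' : Fin (n + k), Above n k s ρ ρ' → lb ρ = a ρ' + 1 := by
    intro ρ ρ' h
    have hex : ∃ ρ' : Fin (n + k), Above n k s ρ ρ' := ⟨ρ', h⟩
    simp only [lb, dif_pos hex]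
    congr 2
    exact Fin.ext (hex.choose_spec.unique_right h)
  have hlb0 : ∀ ρ : Fin (n + k), (¬ ∃ ρ' : Fin (n + k), Above n k s ρ ρ') → lb ρ = 0 := by
    intro ρ h
    simp only [lb, dif_neg h]
  let B : Fin (n + k) → Finset ℕ := fun ρ =>
    if Inner n k s ρ then Finset.Ico (lb ρ) (a ρ + 1) else {0}
  let g : Fin (n + k) → ℕ → Fin (n + k) → R := fun ρ b r =>
    if Inner n k s ρ then q ^ b * pathGF q M s r b else stateMat q M n k s 0 ρ r
  have hset : Fintype.piFinset B = innerSet M n k s a := by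
    ext b
    simp only [Fintype.mem_piFinset, innerSet, Finset.mem_filter, Finset.mem_range]
    constructor
    · intro h
      have h1 : ∀ ρ : Fin (n + k), Inner n k s ρ → lb ρ ≤ b ρ ∧ b ρ < a ρ + 1 := by
        intro ρ hρ
        have := h ρ
        simpa only [B, if_pos hρ, Finset.mem_Ico] using this
      have h2 : ∀ ρ : Fin (n + k), ¬ Inner n k s ρ → b ρ = 0 := by
        intro ρ hρ
        have := h ρ
        simpa only [B, if_neg hρ, Finset.mem_singleton] using this
      refine ⟨fun ρ => ?_, h2, fun ρ hρ => Nat.lt_succ_iff.1 (h1 ρ hρ).2, fun ρ ρ' hρ => ?_⟩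
      · by_cases hρ : Inner n k s ρ
        · exact lt_of_le_of_lt (Nat.lt_succ_iff.1 (h1 ρ hρ).2) (haM ρ)
        · rw [h2 ρ hρ]
          exact lt_of_le_of_lt (Nat.zero_le _) (haM ρ)
      · have := (h1 ρ hρ.inner).1
        rw [hlb _ _ hρ] at this
        exact this
    · rintro ⟨h1, h2, h3, h4⟩ ρ
      by_cases hρ : Inner n k s ρ
      · simp only [B, if_pos hρ, Finset.mem_Ico]
        refine ⟨?_, Nat.lt_succ_iff.2 (h3 ρ hρ)⟩
        by_cases h : ∃ ρ' : Fin (n + k), Above n k s ρ ρ'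
        · obtain ⟨ρ', h⟩ := h
          rw [hlb _ _ h]
          exact h4 _ _ h
        · rw [hlb0 ρ h]
          exact Nat.zero_le _
      · simp only [B, if_neg hρ, Finset.mem_singleton]
        exact h2 ρ hρ
  -- the matrix after subtracting neighbouring rows, before dropping the summand of the new row
  let C : Matrix (Fin (n + k)) (Fin (n + k)) R := Matrix.of fun ρ r =>
    if (ρ : ℕ) = s then (if (r : ℕ) = s then 1 else 0) +
      ∑ b ∈ Finset.range (a ρ + 1), q ^ b * pathGF q M s r b
    else ∑ b ∈ B ρ, g ρ b r
  have hnew : ∀ ρ : Fin (n + k), (ρ : ℕ) = s → Alive n k s ρ := fun ρ h =>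
    ⟨h.le, h ▸ lt_killTime ρ⟩
  have hinner : ∀ ρ : Fin (n + k), (ρ : ℕ) ≠ s → (Inner n k s ρ ↔ Alive n k s ρ) := by
    intro ρ h
    refine ⟨fun h' => ⟨h'.1.le, h'.2⟩, fun h' => ⟨lt_of_le_of_ne h'.1 h, h'.2⟩⟩
  have hdet : (cornerMat q M n k s a).det = C.det := by
    apply det_eq_of_eq_add_mul_of_upper _ _
      (Matrix.of fun i j : Fin (n + k) => if Above n k s i j then (1 : R) else 0)
    · intro i j hij
      rw [Matrix.of_apply, if_neg]
      intro h
      have := h.lt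
      have : (j : ℕ) ≤ i := hij
      omega
    · ext ρ r
      rw [Matrix.add_apply, Matrix.mul_apply]
      simp only [Matrix.of_apply, C]
      by_cases hρs : (ρ : ℕ) = s
      · rw [sum_ite_mul_of_forall_not, add_zero, if_pos hρs]
        · simp only [cornerMat, Matrix.of_apply, if_pos (hnew ρ hρs)]
        · intro i hi
          have := hi.inner.1
          omega
      rw [if_neg hρs]
      by_cases hρ : Alive n k s ρ
      · have hρi := (hinner ρ hρs).2 hρ
        by_cases h : ∃ ρ' : Fin (n + k), Above n k s ρ ρ'
        · obtain ⟨ρ', h⟩ := h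
          rw [sum_ite_mul_of_unique (fun j : Fin (n + k) => Above n k s ρ j)
            (fun j => cornerMat q M n k s a j r) ρ' h
            (fun i hi => Fin.ext (hi.unique_right h))]
          simp only [cornerMat, Matrix.of_apply, if_pos hρ, if_pos h.2.1, B, g, if_pos hρi,
            hlb _ _ h]
          rw [← Finset.sum_range_add_sum_Ico _ (show a ρ' + 1 ≤ a ρ + 1 by
            have := hlow _ _ h; omega)]
          ring
        · have hsN : n + k ≤ s := by
            by_contra hcon
            exact h (exists_below_of_alive (by omega) ρ hρ hρs)
          rw [sum_ite_mul_of_forall_not _ _ (fun i hi => h ⟨i, hi⟩), add_zero]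
          simp only [cornerMat, Matrix.of_apply, if_pos hρ, B, g, if_pos hρi, hlb0 ρ h,
            Nat.Ico_zero_eq_range]
          have := r.isLt
          rw [if_neg (by omega), zero_add]
      · rw [sum_ite_mul_of_forall_not _ _ (fun i hi => hρ hi.1), add_zero]
        have hρi := fun h => hρ ((hinner ρ hρs).1 h)
        simp only [cornerMat, Matrix.of_apply, if_neg hρ, B, g, if_neg hρi, Finset.sum_singleton]
  have hC : C.det = (Matrix.of fun ρ r => ∑ b ∈ B ρ, g ρ b r).det := by
    by_cases hs : s < n + k
    · have hns : ¬ Inner n k s s := fun h => lt_irrefl _ h.1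
      apply det_eq_of_unit_row _ _ (⟨s, hs⟩ : Fin (n + k))
      · intro ρ hρ r
        have hρ' : (ρ : ℕ) ≠ s := fun h => hρ (Fin.ext h)
        simp only [C, Matrix.of_apply, if_neg hρ']
      · intro ρ hρ
        have hρ' : (ρ : ℕ) ≠ s := fun h => hρ (Fin.ext h)
        simp only [C, Matrix.of_apply, if_neg hρ']
        refine Finset.sum_eq_zero fun b _ => ?_
        simp only [g]
        split_ifs with h
        · rw [pathGF_eq_zero q M le_rfl, mul_zero]
        · simp only [stateMat, Matrix.of_apply]
          split_ifs with h1 h2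
          · exact absurd h2.symm hρ
          · rfl
          · exact pathGF_eq_zero q M (min_le_left _ _) _
      · simp [C, pathGF_eq_zero]
      · intro j
        simp [B, g, hns, stateMat]
    · congr 1
      ext ρ r
      have := ρ.isLt
      simp only [C, Matrix.of_apply]
      rw [if_neg (by omega)]
  rw [hdet, hC, det_sum_rows, hset]
  refine Finset.sum_congr rfl fun b hb => ?_
  have hb0 : ∀ ρ : Fin (n + k), ¬ Inner n k s ρ → b ρ = 0 := (Finset.mem_filter.1 hb).2.1
  rw [← Finset.prod_pow_eq_pow_sum, ← Matrix.det_mul_column]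
  congr 1
  ext ρ r
  simp only [Matrix.of_apply, g]
  by_cases hρ : Inner n k s ρ
  · have h1 := hρ.1
    have h2 := hρ.2
    simp only [if_pos hρ, stateMat, Matrix.of_apply]
    rw [if_neg (by omega), min_eq_left (by omega)]
  · simp only [if_neg hρ, hb0 ρ hρ, pow_zero, one_mul, stateMat, Matrix.of_apply, Pi.zero_apply]

theorem compat_of_mem_innerSet {M s : ℕ} (a y : Fin (n + k) → ℕ)
    (ha : a ∈ cornerSet M n k (s + 1) y) (b : Fin (n + k) → ℕ)
    (hb : b ∈ innerSet M n k (s + 1) a) : Compat M n k s b := by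
  simp only [cornerSet, innerSet, Finset.mem_filter, Fintype.mem_piFinset, Finset.mem_range]
    at ha hb
  obtain ⟨haM, ha0, hay, haA⟩ := ha
  obtain ⟨hbM, hb0, hba, hbA⟩ := hb
  refine ⟨fun ρ hρ => hb0 ρ fun h => ?_, hbM, fun ρ ρ' h => ?_⟩
  · have := h.2
    omega
  · by_cases h' : Inner n k (s + 1) ρ'
    · have habove : Above n k (s + 1) ρ ρ' := by
        obtain ⟨⟨h1, h2⟩, ⟨h3, h4⟩, h5, h6⟩ := h
        obtain ⟨h7, h8⟩ := h'
        refine ⟨⟨?_, ?_⟩, ⟨?_, ?_⟩, h5, h6⟩ <;> simp only [killTime] at * <;>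
          split_ifs at * <;> omega
      exact ((hba ρ' h').trans_lt (hbA ρ ρ' habove)).le
    · rw [hb0 ρ' h']
      exact Nat.zero_le _

end Rounds

section Histories

variable {R : Type*} [CommRing R]

/-- The sequences `h` with `h s = x`, `h σ ∈ step σ (h (σ + 1))` for `σ < s`, and `h σ = d`
for `s < σ`. -/
def histories {α : Type*} (d : α) (step : ℕ → α → Finset α) : ℕ → α → Finset (ℕ → α)
  | 0, x => {Function.update (fun _ => d) 0 x}
  | s + 1, x => (step s x).biUnion fun p =>
      (histories d step s p).image fun h => Function.update h (s + 1) x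

theorem mem_histories {α : Type*} (d : α) (step : ℕ → α → Finset α) (s : ℕ) (x : α) (h : ℕ → α) :
    h ∈ histories d step s x ↔
      h s = x ∧ (∀ σ, s < σ → h σ = d) ∧ ∀ σ, σ < s → h σ ∈ step σ (h (σ + 1)) := by
  induction s generalizing x h with
  | zero =>
    simp only [histories, Finset.mem_singleton]
    constructor
    · rintro rfl
      refine ⟨by simp, fun σ hσ => ?_, fun σ hσ => absurd hσ (Nat.not_lt_zero _)⟩
      rw [Function.update_of_ne hσ.ne']
    · rintro ⟨h1, h2, -⟩
      ext1 σ
      rcases Nat.eq_zero_or_pos σ with rfl | hσ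
      · simpa using h1
      · rw [Function.update_of_ne hσ.ne', h2 σ hσ]
  | succ s ih =>
    simp only [histories, Finset.mem_biUnion, Finset.mem_image]
    constructor
    · rintro ⟨p, hp, h', hh', rfl⟩
      obtain ⟨h1, h2, h3⟩ := (ih p h').1 hh'
      refine ⟨by simp, fun σ hσ => ?_, fun σ hσ => ?_⟩
      · rw [Function.update_of_ne hσ.ne', h2 σ (by omega)]
      · rw [Function.update_of_ne hσ.ne]
        rcases Nat.lt_succ_iff_lt_or_eq.1 hσ with hlt | rfl
        · rw [Function.update_of_ne (by omega)]
          exact h3 σ hlt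
        · rw [Function.update_self, h1]
          exact hp
    · rintro ⟨h1, h2, h3⟩
      refine ⟨h s, ?_, Function.update h (s + 1) d, (ih _ _).2 ⟨?_, fun σ hσ => ?_, fun σ hσ => ?_⟩,
        ?_⟩
      · rw [← h1]
        exact h3 s (Nat.lt_succ_self s)
      · rw [Function.update_of_ne (by omega)]
      · rcases eq_or_ne σ (s + 1) with rfl | hne
        · simp
        · rw [Function.update_of_ne hne]
          exact h2 σ (by omega)
      · rw [Function.update_of_ne (by omega), Function.update_of_ne (by omega)]
        exact h3 σ (by omega)
      · rw [Function.update_idem, ← h1, Function.update_eq_self]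

theorem eq_sum_histories {α : Type*} (d : α) (step : ℕ → α → Finset α) (w : α → R)
    (W : ℕ → α → R) (P : ℕ → α → Prop) (h0 : ∀ x, W 0 x = 1)
    (hW : ∀ s x, P (s + 1) x → W (s + 1) x = ∑ p ∈ step s x, w p * W s p)
    (hP : ∀ s x, P (s + 1) x → ∀ p ∈ step s x, P s p) (s : ℕ) (x : α) (hx : P s x) :
    W s x = ∑ h ∈ histories d step s x, ∏ σ ∈ Finset.range s, w (h σ) := by
  induction s generalizing x with
  | zero => simp [histories, h0]
  | succ s ih =>
    rw [hW s x hx, histories, Finset.sum_biUnion]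
    · refine Finset.sum_congr rfl fun p hp => ?_
      rw [ih p (hP s x hx p hp), Finset.mul_sum, Finset.sum_image]
      · refine Finset.sum_congr rfl fun h hh => ?_
        rw [Finset.prod_range_succ, Function.update_of_ne (by omega),
          ((mem_histories d step s p h).1 hh).1, mul_comm]
        congr 1
        refine Finset.prod_congr rfl fun σ hσ => ?_
        have := Finset.mem_range.1 hσ
        rw [Function.update_of_ne (by omega)]
      · intro h hh h' hh' heq
        have h1 := ((mem_histories d step s p h).1 hh).2.1 (s + 1) (Nat.lt_succ_self s)
        have h2 := ((mem_histories d step s p h').1 hh').2.1 (s + 1) (Nat.lt_succ_self s)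
        ext1 σ
        rcases eq_or_ne σ (s + 1) with rfl | hne
        · rw [h1, h2]
        · have := congrFun heq σ
          simpa only [Function.update_of_ne hne] using this
    · intro p _ p' _ hne
      refine Finset.disjoint_left.2 fun h hh hh' => hne ?_
      obtain ⟨h₁, hh₁, rfl⟩ := Finset.mem_image.1 hh
      obtain ⟨h₂, hh₂, heq⟩ := Finset.mem_image.1 hh'
      have := congrFun heq s
      rw [Function.update_of_ne (by omega), Function.update_of_ne (by omega)] at this
      rw [← ((mem_histories d step s p h₁).1 hh₁).1, ← this,
        ((mem_histories d step s p' h₂).1 hh₂).1]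

variable {n k : ℕ}

/-- The admissible pairs of corner values and inner values at the corner `s`. -/
def roundSet (M n k s : ℕ) (x : (Fin (n + k) → ℕ) × (Fin (n + k) → ℕ)) :
    Finset ((Fin (n + k) → ℕ) × (Fin (n + k) → ℕ)) :=
  (cornerSet M n k s x.2).biUnion fun a => (innerSet M n k s a).image fun b => (a, b)

theorem mem_roundSet {M s : ℕ} {x p : (Fin (n + k) → ℕ) × (Fin (n + k) → ℕ)} :
    p ∈ roundSet M n k s x ↔ p.1 ∈ cornerSet M n k s x.2 ∧ p.2 ∈ innerSet M n k s p.1 := by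
  obtain ⟨a, b⟩ := p
  simp only [roundSet, Finset.mem_biUnion, Finset.mem_image, Prod.mk.injEq]
  constructor
  · rintro ⟨a', ha', b', hb', rfl, rfl⟩
    exact ⟨ha', hb'⟩
  · rintro ⟨ha, hb⟩
    exact ⟨a, ha, b, hb, rfl, rfl⟩

theorem sum_roundSet (M s : ℕ) (x : (Fin (n + k) → ℕ) × (Fin (n + k) → ℕ))
    (f : (Fin (n + k) → ℕ) × (Fin (n + k) → ℕ) → R) :
    ∑ p ∈ roundSet M n k s x, f p =
      ∑ a ∈ cornerSet M n k s x.2, ∑ b ∈ innerSet M n k s a, f (a, b) := by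
  rw [roundSet, Finset.sum_biUnion]
  · refine Finset.sum_congr rfl fun a _ => ?_
    rw [Finset.sum_image fun b _ b' _ h => (Prod.mk.inj h).2]
  · intro a _ a' _ hne
    refine Finset.disjoint_left.2 fun p hp hp' => hne ?_
    obtain ⟨b, -, rfl⟩ := Finset.mem_image.1 hp
    obtain ⟨b', -, h⟩ := Finset.mem_image.1 hp'
    exact (Prod.mk.inj h).1.symm

theorem det_stateMat_eq_sum_histories (q : R) {M : ℕ} (hM : 0 < M) :
    (stateMat q M n k (n + 2 * k) 0).det =
      ∑ h ∈ histories 0 (roundSet M n k) (n + 2 * k) 0,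
        q ^ ∑ s ∈ Finset.range (n + 2 * k), (∑ ρ, (h s).1 ρ + ∑ ρ, (h s).2 ρ) := by
  have key := eq_sum_histories (R := R) 0 (roundSet M n k)
    (fun p => q ^ (∑ ρ, p.1 ρ + ∑ ρ, p.2 ρ)) (fun s x => (stateMat q M n k s x.2).det)
    (fun s x => ∀ s', s = s' + 1 → Compat M n k s' x.2) ?_ ?_ ?_ (n + 2 * k) 0 ?_
  · rw [show (0 : Fin (n + k) → ℕ) =
      (0 : (Fin (n + k) → ℕ) × (Fin (n + k) → ℕ)).2 from rfl, key]
    exact Finset.sum_congr rfl fun h _ => Finset.prod_pow_eq_pow_sum _ _ _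
  · intro x
    have : stateMat q M n k 0 x.2 = 1 := by
      ext ρ r
      simp [stateMat, Matrix.one_apply, eq_comm]
    simp only [this, Matrix.det_one]
  · intro s x hx
    rw [det_stateMat_succ_eq_sum_corner q x.2 (hx s rfl), sum_roundSet]
    refine Finset.sum_congr rfl fun a ha => ?_
    rw [det_cornerMat_eq_sum_inner q a x.2 ha, Finset.mul_sum]
    refine Finset.sum_congr rfl fun b _ => ?_
    rw [pow_add, mul_assoc]
  · rintro s x hx p hp s' rfl
    obtain ⟨h1, h2⟩ := mem_roundSet.1 hp
    exact compat_of_mem_innerSet p.1 x.2 h1 p.2 h2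
  · intro s _
    exact ⟨fun _ _ => rfl, fun _ => hM, fun _ _ _ => le_rfl⟩

end Histories

section Cells

variable {n k : ℕ}

theorem mem_shape {c : ℕ × ℕ} : c ∈ deltaCells (n + 2 * k + 1) \ deltaCells n ↔
    1 ≤ c.1 ∧ 1 ≤ c.2 ∧ n < c.1 + c.2 ∧ c.1 + c.2 ≤ n + 2 * k + 1 := by
  simp only [deltaCells, Finset.mem_sdiff, Finset.mem_filter, Finset.mem_product, Finset.mem_Icc]
  omega

/-- Halved distance of a cell to the outer border; this is the index of the path through the cell,
unless the cell lies on the inner border. -/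
def depth (n k : ℕ) (c : ℕ × ℕ) : ℕ := (n + 2 * k + 1 - (c.1 + c.2)) / 2

/-- Strictified reverse plane partitions of the shape `δ_{n+2k+1}/δ_n`. -/
def IsShifted (n k : ℕ) (g : ℕ × ℕ → ℕ) : Prop :=
  (∀ c, c ∉ deltaCells (n + 2 * k + 1) \ deltaCells n → g c = 0) ∧
    ∀ c c' : ℕ × ℕ, c ∈ deltaCells (n + 2 * k + 1) \ deltaCells n →
      c' ∈ deltaCells (n + 2 * k + 1) \ deltaCells n →
      (c' = (c.1 + 1, c.2) ∨ c' = (c.1, c.2 + 1)) → g c + depth n k c ≤ g c' + depth n k c'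

/-- The cell of the corner `s` of the path `ρ`. -/
def cornerCell (n k s ρ : ℕ) : ℕ × ℕ := (n + 2 * k - min ρ k - s, s + 1 - min ρ k)

/-- The cell of the path `ρ` between the corners `s - 1` and `s`. -/
def innerCell (n k s ρ : ℕ) : ℕ × ℕ := (n + 2 * k - ρ - s, s - ρ)

/-- Extension of a tuple by zero. -/
def extendZero {N : ℕ} (a : Fin N → ℕ) (i : ℕ) : ℕ := if h : i < N then a ⟨i, h⟩ else 0

/-- The history of a filling. -/
def toHistory (n k : ℕ) (g : ℕ × ℕ → ℕ) (s : ℕ) : (Fin (n + k) → ℕ) × (Fin (n + k) → ℕ) :=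
  (fun ρ => if Alive n k s ρ then g (cornerCell n k s ρ) else 0,
    fun ρ => if Inner n k s ρ then g (innerCell n k s ρ) else 0)

/-- The filling with a given history. -/
def ofHistory (n k : ℕ) (h : ℕ → (Fin (n + k) → ℕ) × (Fin (n + k) → ℕ)) (c : ℕ × ℕ) : ℕ :=
  if c ∈ deltaCells (n + 2 * k + 1) \ deltaCells n then
    if (n + 2 * k + 1 - (c.1 + c.2)) % 2 = 0 then
      extendZero (h (c.2 - 1 + depth n k c)).1
        (if depth n k c < k then depth n k c else c.2 - 1 + depth n k c)
    else extendZero (h (c.2 + depth n k c)).2 (depth n k c)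
  else 0

theorem cornerCell_mem {s : ℕ} (ρ : Fin (n + k)) (hρ : Alive n k s ρ) :
    cornerCell n k s ρ ∈ deltaCells (n + 2 * k + 1) \ deltaCells n := by
  obtain ⟨h1, h2⟩ := hρ
  have h3 := ρ.isLt
  rw [mem_shape]
  simp only [cornerCell]
  unfold killTime at h2
  split_ifs at h2 <;> omega

theorem innerCell_mem {s : ℕ} (ρ : Fin (n + k)) (hρ : Inner n k s ρ) :
    innerCell n k s ρ ∈ deltaCells (n + 2 * k + 1) \ deltaCells n := by
  obtain ⟨h1, h2⟩ := hρ
  have h3 := ρ.isLt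
  rw [mem_shape]
  simp only [innerCell]
  unfold killTime at h2
  split_ifs at h2 <;> omega

theorem depth_cornerCell {s : ℕ} (ρ : Fin (n + k)) (hρ : Alive n k s ρ) :
    depth n k (cornerCell n k s ρ) = min (ρ : ℕ) k := by
  obtain ⟨h1, h2⟩ := hρ
  have h3 := ρ.isLt
  simp only [depth, cornerCell]
  unfold killTime at h2
  split_ifs at h2 <;> omega

theorem depth_innerCell {s : ℕ} (ρ : Fin (n + k)) (hρ : Inner n k s ρ) :
    depth n k (innerCell n k s ρ) = ρ := by
  obtain ⟨h1, h2⟩ := hρ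
  have h3 := ρ.isLt
  simp only [depth, innerCell]
  unfold killTime at h2
  split_ifs at h2 <;> omega

theorem ofHistory_cornerCell (h : ℕ → (Fin (n + k) → ℕ) × (Fin (n + k) → ℕ)) {s : ℕ}
    (ρ : Fin (n + k)) (hρ : Alive n k s ρ) : ofHistory n k h (cornerCell n k s ρ) = (h s).1 ρ := by
  obtain ⟨h1, h2⟩ := hρ
  have h3 := ρ.isLt
  rw [ofHistory, if_pos (cornerCell_mem ρ ⟨h1, h2⟩), if_pos, depth_cornerCell ρ ⟨h1, h2⟩]
  · have hs : (cornerCell n k s ρ).2 - 1 + min (ρ : ℕ) k = s := by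
      simp only [cornerCell]; omega
    rw [hs]
    have hi : (if min (ρ : ℕ) k < k then min (ρ : ℕ) k else s) = ρ := by
      unfold killTime at h2
      split_ifs at * <;> omega
    rw [hi, extendZero, dif_pos h3]
  · simp only [cornerCell]
    unfold killTime at h2
    split_ifs at h2 <;> omega

theorem ofHistory_innerCell (h : ℕ → (Fin (n + k) → ℕ) × (Fin (n + k) → ℕ)) {s : ℕ}
    (ρ : Fin (n + k)) (hρ : Inner n k s ρ) : ofHistory n k h (innerCell n k s ρ) = (h s).2 ρ := by
  obtain ⟨h1, h2⟩ := hρ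
  have h3 := ρ.isLt
  rw [ofHistory, if_pos (innerCell_mem ρ ⟨h1, h2⟩), if_neg, depth_innerCell ρ ⟨h1, h2⟩]
  · have hs : (innerCell n k s ρ).2 + ρ = s := by
      simp only [innerCell]; omega
    rw [hs, extendZero, dif_pos h3]
  · simp only [innerCell]
    unfold killTime at h2
    split_ifs at h2 <;> omega

theorem exists_eq_cornerCell_or_innerCell {c : ℕ × ℕ}
    (hc : c ∈ deltaCells (n + 2 * k + 1) \ deltaCells n) :
    (∃ ρ : Fin (n + k), ∃ s, Alive n k s ρ ∧ c = cornerCell n k s ρ) ∨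
      ∃ ρ : Fin (n + k), ∃ s, Inner n k s ρ ∧ c = innerCell n k s ρ := by
  obtain ⟨i, j⟩ := c
  obtain ⟨h1, h2, h3, h4⟩ := mem_shape.1 hc
  simp only at h1 h2 h3 h4
  obtain ⟨r, hr⟩ : ∃ r, r = (n + 2 * k + 1 - (i + j)) / 2 := ⟨_, rfl⟩
  rcases Nat.mod_two_eq_zero_or_one (n + 2 * k + 1 - (i + j)) with he | he
  · left
    by_cases hrk : r < k
    · refine ⟨⟨r, by omega⟩, j - 1 + r, ⟨?_, ?_⟩, Prod.ext ?_ ?_⟩ <;>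
        simp only [killTime, cornerCell, if_pos hrk] <;> omega
    · refine ⟨⟨j - 1 + r, by omega⟩, j - 1 + r, ⟨?_, ?_⟩, Prod.ext ?_ ?_⟩ <;>
        simp only [killTime, cornerCell]
      · exact le_rfl
      · rw [if_neg (by omega)]
        omega
      all_goals omega
  · right
    have hrk : r < k := by omega
    refine ⟨⟨r, by omega⟩, j + r, ⟨?_, ?_⟩, Prod.ext ?_ ?_⟩ <;>
      simp only [killTime, innerCell, if_pos hrk] <;> omega

theorem ofHistory_toHistory {g : ℕ × ℕ → ℕ}
    (hg : ∀ c, c ∉ deltaCells (n + 2 * k + 1) \ deltaCells n → g c = 0) :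
    ofHistory n k (toHistory n k g) = g := by
  ext1 c
  by_cases hc : c ∈ deltaCells (n + 2 * k + 1) \ deltaCells n
  · rcases exists_eq_cornerCell_or_innerCell hc with ⟨ρ, s, h, rfl⟩ | ⟨ρ, s, h, rfl⟩
    · rw [ofHistory_cornerCell _ ρ h]
      exact if_pos h
    · rw [ofHistory_innerCell _ ρ h]
      exact if_pos h
  · rw [hg c hc, ofHistory, if_neg hc]

theorem killTime_le (ρ : Fin (n + k)) : killTime n k ρ ≤ n + 2 * k := by
  have := ρ.isLt
  unfold killTime
  split_ifs <;> omega

theorem mem_histories_iff {M : ℕ} {h : ℕ → (Fin (n + k) → ℕ) × (Fin (n + k) → ℕ)} :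
    h ∈ histories 0 (roundSet M n k) (n + 2 * k) 0 ↔ (∀ s, n + 2 * k ≤ s → h s = 0) ∧
      ∀ s, s < n + 2 * k → (h s).1 ∈ cornerSet M n k s (h (s + 1)).2 ∧
        (h s).2 ∈ innerSet M n k s (h s).1 := by
  rw [mem_histories]
  simp only [mem_roundSet]
  constructor
  · rintro ⟨h1, h2, h3⟩
    refine ⟨fun s hs => ?_, h3⟩
    rcases hs.eq_or_lt with rfl | hs
    · exact h1
    · exact h2 s hs
  · rintro ⟨h1, h2⟩
    exact ⟨h1 _ le_rfl, fun s hs => h1 s hs.le, h2⟩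

theorem toHistory_ofHistory {M : ℕ} {h : ℕ → (Fin (n + k) → ℕ) × (Fin (n + k) → ℕ)}
    (hh : h ∈ histories 0 (roundSet M n k) (n + 2 * k) 0) :
    toHistory n k (ofHistory n k h) = h := by
  obtain ⟨h1, h2⟩ := mem_histories_iff.1 hh
  ext1 s
  refine Prod.ext (funext fun ρ => ?_) (funext fun ρ => ?_) <;> simp only [toHistory]
  · by_cases hρ : Alive n k s ρ
    · rw [if_pos hρ, ofHistory_cornerCell _ ρ hρ]
    · rw [if_neg hρ]
      rcases lt_or_ge s (n + 2 * k) with hs | hs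
      · exact ((Finset.mem_filter.1 (h2 s hs).1).2.1 ρ hρ).symm
      · rw [h1 s hs]
        rfl
  · by_cases hρ : Inner n k s ρ
    · rw [if_pos hρ, ofHistory_innerCell _ ρ hρ]
    · rw [if_neg hρ]
      rcases lt_or_ge s (n + 2 * k) with hs | hs
      · exact ((Finset.mem_filter.1 (h2 s hs).2).2.1 ρ hρ).symm
      · rw [h1 s hs]
        rfl

theorem isShifted_ofHistory {M : ℕ} {h : ℕ → (Fin (n + k) → ℕ) × (Fin (n + k) → ℕ)}
    (hh : h ∈ histories 0 (roundSet M n k) (n + 2 * k) 0) : IsShifted n k (ofHistory n k h) := by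
  obtain ⟨-, hstep⟩ := mem_histories_iff.1 hh
  have hcorner : ∀ s, ∀ ρ : Fin (n + k), Alive n k s ρ → (h s).1 ∈ cornerSet M n k s (h (s + 1)).2 :=
    fun s ρ hρ => (hstep s (hρ.2.trans_le (killTime_le ρ))).1
  have hinner : ∀ s, ∀ ρ : Fin (n + k), Inner n k s ρ → (h s).2 ∈ innerSet M n k s (h s).1 :=
    fun s ρ hρ => (hstep s (hρ.2.trans_le (killTime_le ρ))).2
  refine ⟨fun c hc => if_neg hc, fun c c' hc hc' hadj => ?_⟩
  rcases exists_eq_cornerCell_or_innerCell hc with ⟨ρ, s, hρ, rfl⟩ | ⟨ρ, s, hρ, rfl⟩ <;>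
    rcases exists_eq_cornerCell_or_innerCell hc' with ⟨ρ', s', hρ', rfl⟩ | ⟨ρ', s', hρ', rfl⟩
  · exfalso
    obtain ⟨h1, h2⟩ := hρ
    obtain ⟨h1', h2'⟩ := hρ'
    simp only [cornerCell, Prod.mk.injEq] at hadj
    unfold killTime at h2 h2'
    split_ifs at h2 h2' <;> omega
  · rw [ofHistory_cornerCell _ ρ hρ, ofHistory_innerCell _ ρ' hρ', depth_cornerCell ρ hρ,
      depth_innerCell ρ' hρ']
    have hs : (s' = s ∨ s' = s + 1) ∧ Above n k s ρ' ρ := by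
      obtain ⟨h1, h2⟩ := hρ
      obtain ⟨h1', h2'⟩ := hρ'
      simp only [cornerCell, innerCell, Prod.mk.injEq] at hadj
      refine ⟨?_, ⟨?_, ?_⟩, ⟨h1, h2⟩, ?_, ?_⟩ <;> unfold killTime at * <;>
        split_ifs at h2 h2' ⊢ <;> omega
    have hlt : (h s).1 ρ < (h s').2 ρ' := by
      rcases hs with ⟨rfl | rfl, habove⟩
      · exact (Finset.mem_filter.1 (hinner _ _ hρ')).2.2.2 _ _ habove
      · exact (Finset.mem_filter.1 (hcorner _ _ hρ)).2.2.2 _ _ habove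
    have := hs.2.2.2.1
    have := hs.2.2.2.2
    omega
  · rw [ofHistory_innerCell _ ρ hρ, ofHistory_cornerCell _ ρ' hρ', depth_innerCell ρ hρ,
      depth_cornerCell ρ' hρ']
    have hs : (s = s' ∨ s = s' + 1) ∧ ρ = ρ' ∧ (ρ : ℕ) < k := by
      rw [← Fin.val_inj]
      obtain ⟨h1, h2⟩ := hρ
      obtain ⟨h1', h2'⟩ := hρ'
      simp only [cornerCell, innerCell, Prod.mk.injEq] at hadj
      unfold killTime at h2 h2'
      split_ifs at h2 h2' <;> omega
    obtain ⟨hs, rfl, hk⟩ := hs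
    have hle : (h s).2 ρ ≤ (h s').1 ρ := by
      rcases hs with rfl | rfl
      · exact (Finset.mem_filter.1 (hinner _ _ hρ)).2.2.1 _ hρ
      · exact (Finset.mem_filter.1 (hcorner _ _ hρ')).2.2.1 _ hρ'
    omega
  · exfalso
    obtain ⟨h1, h2⟩ := hρ
    obtain ⟨h1', h2'⟩ := hρ'
    simp only [innerCell, Prod.mk.injEq] at hadj
    unfold killTime at h2 h2'
    split_ifs at h2 h2' <;> omega

theorem toHistory_mem (hk : 0 < k) {M : ℕ} {g : ℕ × ℕ → ℕ} (hg : IsShifted n k g)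
    (hM : ∀ c, g c < M) :
    toHistory n k g ∈ histories 0 (roundSet M n k) (n + 2 * k) 0 := by
  have hM0 : 0 < M := (Nat.zero_le _).trans_lt (hM 0)
  have habove : ∀ {s : ℕ} {ρ ρ' : Fin (n + k)}, Above n k s ρ ρ' →
      g (cornerCell n k s ρ') < g (innerCell n k s ρ) ∧
        g (cornerCell n k s ρ') < g (innerCell n k (s + 1) ρ) ∧ Inner n k (s + 1) ρ := by
    intro s ρ ρ' h
    have hi := h.inner
    have hi' : Inner n k (s + 1) ρ := by
      obtain ⟨⟨h1, h2⟩, ⟨h1', h2'⟩, h3, h4⟩ := h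
      have := ρ'.isLt
      refine ⟨by omega, ?_⟩
      unfold killTime at *
      split_ifs at h2 h2' ⊢ <;> omega
    have h1 := hg.2 _ _ (cornerCell_mem ρ' h.2.1) (innerCell_mem ρ hi)
    have h2 := hg.2 _ _ (cornerCell_mem ρ' h.2.1) (innerCell_mem ρ hi')
    rw [depth_cornerCell ρ' h.2.1, depth_innerCell ρ hi] at h1
    rw [depth_cornerCell ρ' h.2.1, depth_innerCell ρ hi'] at h2
    have hadj : innerCell n k s ρ = ((cornerCell n k s ρ').1 + 1, (cornerCell n k s ρ').2) ∧
        innerCell n k (s + 1) ρ = ((cornerCell n k s ρ').1, (cornerCell n k s ρ').2 + 1) := by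
      obtain ⟨⟨h1, h2⟩, ⟨h1', h2'⟩, h3, h4⟩ := h
      have := ρ'.isLt
      simp only [innerCell, cornerCell, Prod.mk.injEq]
      unfold killTime at h2 h2'
      split_ifs at h2 h2' <;> omega
    specialize h1 (Or.inl hadj.1)
    specialize h2 (Or.inr hadj.2)
    have := h.2.2.1
    have := h.2.2.2
    exact ⟨by omega, by omega, hi'⟩
  have hinner : ∀ {s s' : ℕ} {ρ : Fin (n + k)}, Inner n k s ρ → Alive n k s' ρ →
      s = s' ∨ s = s' + 1 → g (innerCell n k s ρ) ≤ g (cornerCell n k s' ρ) := by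
    intro s s' ρ h h' hs
    have h1 := hg.2 _ _ (innerCell_mem ρ h) (cornerCell_mem ρ h')
    rw [depth_cornerCell ρ h', depth_innerCell ρ h] at h1
    have hadj : (cornerCell n k s' ρ = ((innerCell n k s ρ).1 + 1, (innerCell n k s ρ).2) ∨
        cornerCell n k s' ρ = ((innerCell n k s ρ).1, (innerCell n k s ρ).2 + 1)) := by
      obtain ⟨h1, h2⟩ := h
      obtain ⟨h1', h2'⟩ := h'
      simp only [innerCell, cornerCell, Prod.mk.injEq]
      unfold killTime at h2 h2'
      split_ifs at h2 h2' <;> omega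
    have := h1 hadj
    omega
  refine mem_histories_iff.2 ⟨fun s hs => ?_, fun s _ => ⟨?_, ?_⟩⟩
  · refine Prod.ext (funext fun ρ => if_neg fun h => ?_) (funext fun ρ => if_neg fun h => ?_) <;>
    · have := h.2
      have := killTime_le ρ
      omega
  · refine Finset.mem_filter.2 ⟨Fintype.mem_piFinset.2 fun ρ => Finset.mem_range.2 ?_,
      fun ρ hρ => if_neg hρ, fun ρ hρ => ?_, fun ρ ρ' h => ?_⟩ <;> simp only [toHistory]
    · split_ifs
      · exact hM _
      · exact hM0
    · rw [if_pos hρ]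
      split_ifs with h
      · exact hinner h hρ (Or.inr rfl)
      · exact Nat.zero_le _
    · rw [if_pos h.2.1, if_pos (habove h).2.2]
      exact (habove h).2.1
  · refine Finset.mem_filter.2 ⟨Fintype.mem_piFinset.2 fun ρ => Finset.mem_range.2 ?_,
      fun ρ hρ => if_neg hρ, fun ρ hρ => ?_, fun ρ ρ' h => ?_⟩ <;> simp only [toHistory]
    · split_ifs
      · exact hM _
      · exact hM0
    · rw [if_pos hρ, if_pos (show Alive n k s ρ from ⟨hρ.1.le, hρ.2⟩)]
      exact hinner hρ ⟨hρ.1.le, hρ.2⟩ (Or.inl rfl)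
    · rw [if_pos h.2.1, if_pos h.inner]
      exact (habove h).1

theorem sum_toHistory (g : ℕ × ℕ → ℕ) :
    ∑ s ∈ Finset.range (n + 2 * k), (∑ ρ, (toHistory n k g s).1 ρ + ∑ ρ, (toHistory n k g s).2 ρ) =
      ∑ c ∈ deltaCells (n + 2 * k + 1) \ deltaCells n, g c := by
  rw [Finset.sum_add_distrib,
    ← Finset.sum_filter_add_sum_filter_not (deltaCells (n + 2 * k + 1) \ deltaCells n)
      (fun c => (n + 2 * k + 1 - (c.1 + c.2)) % 2 = 0)]
  simp only [toHistory]
  rw [← Finset.sum_product', ← Finset.sum_product', ← Finset.sum_filter, ← Finset.sum_filter]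
  congr 1
  · refine Finset.sum_bij (fun p _ => cornerCell n k p.1 p.2) ?_ ?_ ?_ ?_
    · rintro ⟨s, ρ⟩ hp
      have hρ : Alive n k s ρ := (Finset.mem_filter.1 hp).2
      refine Finset.mem_filter.2 ⟨cornerCell_mem ρ hρ, ?_⟩
      obtain ⟨h1, h2⟩ := hρ
      have h3 := ρ.isLt
      simp only [cornerCell]
      unfold killTime at h2
      split_ifs at h2 <;> omega
    · rintro ⟨s, ρ⟩ hp ⟨s', ρ'⟩ hp' heq
      obtain ⟨h1, h2⟩ : Alive n k s ρ := (Finset.mem_filter.1 hp).2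
      obtain ⟨h1', h2'⟩ : Alive n k s' ρ' := (Finset.mem_filter.1 hp').2
      have h3 := ρ.isLt
      have h3' := ρ'.isLt
      simp only [cornerCell, Prod.mk.injEq] at heq
      have : s = s' ∧ (ρ : ℕ) = ρ' := by
        unfold killTime at h2 h2'
        split_ifs at h2 h2' <;> omega
      exact Prod.ext this.1 (Fin.ext this.2)
    · intro c hc
      obtain ⟨hc, hpar⟩ := Finset.mem_filter.1 hc
      rcases exists_eq_cornerCell_or_innerCell hc with ⟨ρ, s, h, rfl⟩ | ⟨ρ, s, h, rfl⟩
      · exact ⟨(s, ρ), Finset.mem_filter.2 ⟨Finset.mem_product.2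
          ⟨Finset.mem_range.2 (h.2.trans_le (killTime_le ρ)), Finset.mem_univ _⟩, h⟩, rfl⟩
      · exfalso
        obtain ⟨h1, h2⟩ := h
        have h3 := ρ.isLt
        simp only [innerCell] at hpar
        unfold killTime at h2
        split_ifs at h2 <;> omega
    · intro _ _
      rfl
  · refine Finset.sum_bij (fun p _ => innerCell n k p.1 p.2) ?_ ?_ ?_ ?_
    · rintro ⟨s, ρ⟩ hp
      have hρ : Inner n k s ρ := (Finset.mem_filter.1 hp).2
      refine Finset.mem_filter.2 ⟨innerCell_mem ρ hρ, ?_⟩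
      obtain ⟨h1, h2⟩ := hρ
      have h3 := ρ.isLt
      simp only [innerCell]
      unfold killTime at h2
      split_ifs at h2 <;> omega
    · rintro ⟨s, ρ⟩ hp ⟨s', ρ'⟩ hp' heq
      obtain ⟨h1, h2⟩ : Inner n k s ρ := (Finset.mem_filter.1 hp).2
      obtain ⟨h1', h2'⟩ : Inner n k s' ρ' := (Finset.mem_filter.1 hp').2
      have h3 := ρ.isLt
      have h3' := ρ'.isLt
      simp only [innerCell, Prod.mk.injEq] at heq
      have : s = s' ∧ (ρ : ℕ) = ρ' := by
        unfold killTime at h2 h2'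
        split_ifs at h2 h2' <;> omega
      exact Prod.ext this.1 (Fin.ext this.2)
    · intro c hc
      obtain ⟨hc, hpar⟩ := Finset.mem_filter.1 hc
      rcases exists_eq_cornerCell_or_innerCell hc with ⟨ρ, s, h, rfl⟩ | ⟨ρ, s, h, rfl⟩
      · exfalso
        obtain ⟨h1, h2⟩ := h
        have h3 := ρ.isLt
        simp only [cornerCell] at hpar
        unfold killTime at h2
        split_ifs at h2 <;> omega
      · exact ⟨(s, ρ), Finset.mem_filter.2 ⟨Finset.mem_product.2
          ⟨Finset.mem_range.2 (h.2.trans_le (killTime_le ρ)), Finset.mem_univ _⟩, h⟩, rfl⟩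
    · intro _ _
      rfl

end Cells

section Counting

variable {n k : ℕ}

/-- The filling subtracted from a strictified reverse plane partition. -/
def shiftFilling (n k : ℕ) (c : ℕ × ℕ) : ℕ :=
  if c ∈ deltaCells (n + 2 * k + 1) \ deltaCells n then k - depth n k c else 0

theorem sum_range_sub_mul (n k : ℕ) :
    ∑ ρ ∈ Finset.range k, ((n + 2 * k - ρ - ρ) + (n + 2 * k - ρ - (ρ + 1))) * (k - ρ) =
      k * (k + 1) * (6 * n + 8 * k + 1) / 6 := by
  have h : ∀ m, 6 * ∑ r ∈ Finset.range m, (2 * n + 4 * r + 3) * (r + 1) =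
      m * (m + 1) * (6 * n + 8 * m + 1) := by
    intro m
    induction m with
    | zero => simp
    | succ m ih =>
      rw [Finset.sum_range_succ, mul_add, ih]
      ring
  rw [← h k, Nat.mul_div_cancel_left _ (by norm_num), ← Finset.sum_range_reflect]
  refine Finset.sum_congr rfl fun ρ hρ => ?_
  have := Finset.mem_range.1 hρ
  congr 1 <;> omega

theorem sum_shiftFilling (n k : ℕ) :
    ∑ c ∈ deltaCells (n + 2 * k + 1) \ deltaCells n, shiftFilling n k c =
      k * (k + 1) * (6 * n + 8 * k + 1) / 6 := by
  rw [← sum_toHistory, ← sum_range_sub_mul, Finset.sum_add_distrib, Finset.sum_comm,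
    Finset.sum_comm (s := Finset.range (n + 2 * k)), ← Finset.sum_add_distrib]
  have hρ : ∀ ρ : Fin (n + k), ∑ s ∈ Finset.range (n + 2 * k), (toHistory n k (shiftFilling n k) s).1 ρ
      + ∑ s ∈ Finset.range (n + 2 * k), (toHistory n k (shiftFilling n k) s).2 ρ =
      ((n + 2 * k - ρ - ρ) + (n + 2 * k - ρ - (ρ + 1))) * (k - ρ) := by
    intro ρ
    have hlt := ρ.isLt
    have h1 : ∀ s, (toHistory n k (shiftFilling n k) s).1 ρ =
        if Alive n k s ρ then k - (ρ : ℕ) else 0 := by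
      intro s
      simp only [toHistory]
      split_ifs with h
      · rw [shiftFilling, if_pos (cornerCell_mem ρ h), depth_cornerCell ρ h]
        omega
      · rfl
    have h2 : ∀ s, (toHistory n k (shiftFilling n k) s).2 ρ =
        if Inner n k s ρ then k - (ρ : ℕ) else 0 := by
      intro s
      simp only [toHistory]
      split_ifs with h
      · rw [shiftFilling, if_pos (innerCell_mem ρ h), depth_innerCell ρ h]
      · rfl
    have h3 : (Finset.range (n + 2 * k)).filter (fun s => Alive n k s ρ) =
        Finset.Ico (ρ : ℕ) (killTime n k ρ) := by
      ext s
      have := killTime_le ρ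
      rw [Finset.mem_filter, Finset.mem_range, Finset.mem_Ico, Alive]
      omega
    have h4 : (Finset.range (n + 2 * k)).filter (fun s => Inner n k s ρ) =
        Finset.Ico ((ρ : ℕ) + 1) (killTime n k ρ) := by
      ext s
      have := killTime_le ρ
      rw [Finset.mem_filter, Finset.mem_range, Finset.mem_Ico, Inner]
      omega
    simp only [h1, h2]
    rw [← Finset.sum_filter, ← Finset.sum_filter, h3, h4, Finset.sum_const, Finset.sum_const,
      Nat.card_Ico, Nat.card_Ico, smul_eq_mul, smul_eq_mul, ← add_mul]
    by_cases hk : (ρ : ℕ) < k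
    · rw [killTime, if_pos hk]
    · rw [Nat.sub_eq_zero_of_le (not_lt.1 hk), mul_zero, mul_zero]
  rw [Finset.sum_congr rfl fun ρ _ => hρ ρ, Fin.sum_univ_eq_sum_range
    (fun ρ => ((n + 2 * k - ρ - ρ) + (n + 2 * k - ρ - (ρ + 1))) * (k - ρ))]
  refine (Finset.sum_subset (Finset.range_mono (Nat.le_add_left k n)) fun ρ _ h => ?_).symm
  rw [Nat.sub_eq_zero_of_le (show k ≤ ρ by simpa using h), mul_zero]

theorem IsShifted.shiftFilling_le (hn : 0 < n) {g : ℕ × ℕ → ℕ} (hg : IsShifted n k g)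
    (c : ℕ × ℕ) : shiftFilling n k c ≤ g c := by
  obtain ⟨t, ht⟩ : ∃ t, c.1 + c.2 = t := ⟨_, rfl⟩
  induction t generalizing c with
  | zero =>
    rw [shiftFilling, if_neg]
    · exact Nat.zero_le _
    · rw [mem_shape]
      omega
  | succ t ih =>
    by_cases hc : c ∈ deltaCells (n + 2 * k + 1) \ deltaCells n
    · have hc' := mem_shape.1 hc
      obtain ⟨i, j⟩ := c
      simp only at hc' ht
      have hd : shiftFilling n k (i, j) = k - depth n k (i, j) := if_pos hc
      rcases (show t = n ∨ n < t by omega) with rfl | hlt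
      · rw [hd]
        simp only [depth]
        omega
      · obtain ⟨c, hct, hcm, hadj⟩ : ∃ c : ℕ × ℕ, c.1 + c.2 = t ∧
            c ∈ deltaCells (n + 2 * k + 1) \ deltaCells n ∧
            ((i, j) = (c.1 + 1, c.2) ∨ (i, j) = (c.1, c.2 + 1)) := by
          by_cases hi : 2 ≤ i
          · refine ⟨(i - 1, j), ?_, mem_shape.2 ?_, Or.inl (Prod.ext ?_ ?_)⟩ <;> simp only <;> omega
          · refine ⟨(i, j - 1), ?_, mem_shape.2 ?_, Or.inr (Prod.ext ?_ ?_)⟩ <;> simp only <;> omega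
        have h1 := ih c hct
        rw [shiftFilling, if_pos hcm] at h1
        have h2 := hg.2 c (i, j) hcm hc hadj
        rw [hd]
        omega
    · rw [shiftFilling, if_neg hc]
      exact Nat.zero_le _

theorem isRPP_iff_isShifted (f : ℕ × ℕ → ℕ) :
    IsRPP (deltaCells (n + 2 * k + 1) \ deltaCells n) f ↔ IsShifted n k (f + shiftFilling n k) := by
  have hdk : ∀ c : ℕ × ℕ, c ∈ deltaCells (n + 2 * k + 1) \ deltaCells n → depth n k c ≤ k := by
    intro c hc
    have := mem_shape.1 hc
    unfold depth
    omega
  have hle : ∀ c c' : ℕ × ℕ, c ∈ deltaCells (n + 2 * k + 1) \ deltaCells n →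
      c' ∈ deltaCells (n + 2 * k + 1) \ deltaCells n →
      ((f + shiftFilling n k) c + depth n k c ≤ (f + shiftFilling n k) c' + depth n k c' ↔
        f c ≤ f c') := by
    intro c c' hc hc'
    have := hdk c hc
    have := hdk c' hc'
    rw [Pi.add_apply, Pi.add_apply, shiftFilling, shiftFilling, if_pos hc, if_pos hc']
    omega
  have h0 : ∀ c, c ∉ deltaCells (n + 2 * k + 1) \ deltaCells n →
      ((f + shiftFilling n k) c = 0 ↔ f c = 0) := by
    intro c hc
    rw [Pi.add_apply, shiftFilling, if_neg hc, add_zero]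
  constructor
  · rintro ⟨h1, h2, h3⟩
    refine ⟨fun c hc => (h0 c hc).2 (h1 c hc), fun c c' hc hc' hadj => (hle c c' hc hc').2 ?_⟩
    rcases hadj with rfl | rfl
    · exact h3 _ _ hc hc'
    · exact h2 _ _ hc hc'
  · rintro ⟨h1, h2⟩
    exact ⟨fun c hc => (h0 c hc).1 (h1 c hc),
      fun i j hc hc' => (hle _ _ hc hc').1 (h2 _ _ hc hc' (Or.inr rfl)),
      fun i j hc hc' => (hle _ _ hc hc').1 (h2 _ _ hc hc' (Or.inl rfl))⟩

/-- The total of a history. -/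
def historySum {N : ℕ} (L : ℕ) (h : ℕ → (Fin N → ℕ) × (Fin N → ℕ)) : ℕ :=
  ∑ s ∈ Finset.range L, (∑ ρ, (h s).1 ρ + ∑ ρ, (h s).2 ρ)

theorem ncard_isRPP_eq_card_histories (hn : 0 < n) (hk : 0 < k) {M d : ℕ} (hd : d < M) :
    Set.ncard {f : ℕ × ℕ → ℕ | IsRPP (deltaCells (n + 2 * k + 1) \ deltaCells n) f ∧
        ∑ c ∈ deltaCells (n + 2 * k + 1) \ deltaCells n, f c +
          k * (k + 1) * (6 * n + 8 * k + 1) / 6 = d} =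
      ((histories 0 (roundSet M n k) (n + 2 * k) 0).filter
        fun h => historySum (n + 2 * k) h = d).card := by
  rw [← Set.ncard_coe_finset]
  refine Set.ncard_congr (fun f _ => toHistory n k (f + shiftFilling n k)) ?_ ?_ ?_
  · rintro f ⟨hf, hfd⟩
    have hg := (isRPP_iff_isShifted f).1 hf
    have hsum : ∑ c ∈ deltaCells (n + 2 * k + 1) \ deltaCells n, (f + shiftFilling n k) c = d := by
      simp only [Pi.add_apply]
      rw [Finset.sum_add_distrib, sum_shiftFilling, hfd]
    refine Finset.mem_coe.2 (Finset.mem_filter.2 ⟨toHistory_mem hk hg fun c => ?_, ?_⟩)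
    · by_cases hc : c ∈ deltaCells (n + 2 * k + 1) \ deltaCells n
      · refine lt_of_le_of_lt ?_ hd
        rw [← hsum]
        exact Finset.single_le_sum (f := f + shiftFilling n k) (fun _ _ => Nat.zero_le _) hc
      · rw [hg.1 c hc]
        omega
    · rw [historySum, sum_toHistory, hsum]
  · rintro f f' ⟨hf, -⟩ ⟨hf', -⟩ heq
    have h := congrArg (ofHistory n k) heq
    rw [ofHistory_toHistory ((isRPP_iff_isShifted f).1 hf).1,
      ofHistory_toHistory ((isRPP_iff_isShifted f').1 hf').1] at h
    exact add_right_cancel h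
  · intro h hh
    obtain ⟨hh, hd⟩ := Finset.mem_filter.1 (Finset.mem_coe.1 hh)
    have hg := isShifted_ofHistory hh
    have hsub : (fun c => ofHistory n k h c - shiftFilling n k c) + shiftFilling n k =
        ofHistory n k h := by
      ext1 c
      exact Nat.sub_add_cancel (hg.shiftFilling_le hn c)
    refine ⟨fun c => ofHistory n k h c - shiftFilling n k c, ⟨?_, ?_⟩, ?_⟩
    · rw [isRPP_iff_isShifted, hsub]
      exact hg
    · rw [← sum_shiftFilling, ← Finset.sum_add_distrib]
      refine (Finset.sum_congr rfl fun c _ => congrFun hsub c).trans ?_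
      rw [← sum_toHistory, toHistory_ofHistory hh]
      exact hd
    · rw [hsub, toHistory_ofHistory hh]

theorem coeff_X_pow_mul_rppGF (hn : 0 < n) (hk : 0 < k) {M d : ℕ} (hd : d < M) :
    PowerSeries.coeff d ((PowerSeries.X : PowerSeries ℚ) ^ (k * (k + 1) * (6 * n + 8 * k + 1) / 6) *
        rppGF (deltaCells (n + 2 * k + 1) \ deltaCells n)) =
      (((histories 0 (roundSet M n k) (n + 2 * k) 0).filter
        fun h => historySum (n + 2 * k) h = d).card : ℚ) := by
  rw [← ncard_isRPP_eq_card_histories hn hk hd, PowerSeries.coeff_X_pow_mul']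
  split_ifs with h
  · rw [rppGF, PowerSeries.coeff_mk]
    congr 2
    ext f
    refine and_congr_right fun _ => ?_
    omega
  · rw [eq_comm, Nat.cast_eq_zero]
    refine (congrArg Set.ncard (Set.eq_empty_of_forall_notMem ?_)).trans (Set.ncard_empty _)
    rintro f ⟨-, hf⟩
    omega

theorem X_pow_dvd_sub_det_stateMat (hn : 0 < n) (hk : 0 < k) {M : ℕ} (hM : 0 < M) :
    (PowerSeries.X : PowerSeries ℚ) ^ M ∣
      PowerSeries.X ^ (k * (k + 1) * (6 * n + 8 * k + 1) / 6) *
        rppGF (deltaCells (n + 2 * k + 1) \ deltaCells n) -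
      (stateMat (PowerSeries.X : PowerSeries ℚ) M n k (n + 2 * k) 0).det := by
  rw [PowerSeries.X_pow_dvd_iff]
  intro d hd
  rw [map_sub, coeff_X_pow_mul_rppGF hn hk hd, det_stateMat_eq_sum_histories _ hM, map_sum,
    Finset.card_filter, Nat.cast_sum, sub_eq_zero]
  refine Finset.sum_congr rfl fun h _ => ?_
  rw [PowerSeries.coeff_X_pow]
  simp only [historySum, Nat.cast_ite, Nat.cast_one, Nat.cast_zero, eq_comm]

end Counting

section Chains

variable {R : Type*} [CommRing R]

/-- The generating function of the tuples `s` of length `N` with entries below `M` such that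
consecutive entries of `s 0, …, s (N - 1), y` are related by `rel 1, …, rel N`. -/
def chainGF (q : R) (M : ℕ) (rel : ℕ → ℕ → ℕ → Prop) : ℕ → ℕ → R
  | 0, _ => 1
  | N + 1, y => ∑ a ∈ Finset.range M, if rel (N + 1) a y then q ^ a * chainGF q M rel N a else 0

/-- Consecutive entries of `s 0, …, s (N - 1), y` are related by `rel 1, …, rel N`. -/
def IsRelChain (rel : ℕ → ℕ → ℕ → Prop) {N M : ℕ} (y : ℕ) (s : Fin N → Fin M) : Prop :=
  ∀ i (h : i < N), rel (i + 1) (s ⟨i, h⟩) (if h' : i + 1 < N then (s ⟨i + 1, h'⟩ : ℕ) else y)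

theorem isRelChain_snoc (rel : ℕ → ℕ → ℕ → Prop) {N M : ℕ} (y : ℕ) (s : Fin N → Fin M)
    (a : Fin M) : IsRelChain rel y (Fin.snoc s a : Fin (N + 1) → Fin M) ↔
      rel (N + 1) a y ∧ IsRelChain rel a s := by
  have hlt : ∀ i (h : i < N), (Fin.snoc s a : Fin (N + 1) → Fin M) ⟨i, by omega⟩ = s ⟨i, h⟩ :=
    fun i h => Fin.snoc_castSucc (α := fun _ => Fin M) a s ⟨i, h⟩
  have hN : (Fin.snoc s a : Fin (N + 1) → Fin M) ⟨N, by omega⟩ = a :=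
    Fin.snoc_last (α := fun _ => Fin M) a s
  constructor
  · intro h
    refine ⟨?_, fun i hi => ?_⟩
    · have := h N (by omega)
      rwa [hN, dif_neg (by omega)] at this
    · have := h i (by omega)
      rw [hlt i hi, dif_pos (by omega)] at this
      split_ifs with h'
      · rwa [hlt _ h'] at this
      · obtain rfl : i + 1 = N := by omega
        rwa [hN] at this
  · rintro ⟨h1, h2⟩ i hi
    rcases Nat.lt_succ_iff_lt_or_eq.1 hi with hlt' | rfl
    · rw [hlt i hlt', dif_pos (by omega)]
      have := h2 i hlt'
      split_ifs at this with h'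
      · rwa [hlt _ h']
      · obtain rfl : i + 1 = N := by omega
        rwa [hN]
    · rwa [hN, dif_neg (by omega)]

theorem chainGF_eq_sum (q : R) (M : ℕ) (rel : ℕ → ℕ → ℕ → Prop) (N y : ℕ) :
    chainGF q M rel N y =
      ∑ s : Fin N → Fin M, if IsRelChain rel y s then q ^ ∑ i, (s i : ℕ) else 0 := by
  induction N generalizing y with
  | zero =>
    have : ∀ s : Fin 0 → Fin M, IsRelChain rel y s := fun s i h => absurd h (Nat.not_lt_zero i)
    simp [chainGF, this]
  | succ N ih =>
    rw [← (Fin.snocEquiv fun _ => Fin M).sum_comp, Fintype.sum_prod_type, chainGF,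
      Finset.sum_range]
    refine Finset.sum_congr rfl fun a _ => ?_
    have hval : ∀ s : Fin N → Fin M, Fin.snocEquiv (fun _ => Fin M) (a, s) =
        (Fin.snoc s a : Fin (N + 1) → Fin M) := fun _ => rfl
    simp only [hval, isRelChain_snoc, Fin.sum_univ_castSucc, Fin.snoc_castSucc, Fin.snoc_last]
    split_ifs with h
    · simp only [true_and, ih, Finset.mul_sum, mul_ite, mul_zero, pow_add, mul_comm, h]
    · simp only [false_and, if_false, Finset.sum_const_zero, h]

/-- The relations of a zigzag whose odd steps go down and whose even steps go up. -/
def zigRel (j a b : ℕ) : Prop := if j % 2 = 1 then b ≤ a else a ≤ b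

theorem pathGF_eq_chainGF (q : R) (M m y : ℕ) :
    pathGF q M (m + 1) 0 y = chainGF q M zigRel (2 * m + 1) y := by
  induction m generalizing y with
  | zero =>
    rw [pathGF_succ]
    simp only [chainGF, zigRel, ← Finset.sum_filter, pathGF]
    refine Finset.sum_congr ?_ fun a _ => by simp
    ext a
    simp only [Finset.mem_Ico, Finset.mem_filter, Finset.mem_range]
    norm_num
    omega
  | succ m ih =>
    rw [pathGF_succ, show 2 * (m + 1) + 1 = 2 * m + 1 + 1 + 1 from rfl, chainGF,
      ← Finset.sum_filter]
    refine Finset.sum_congr ?_ fun a ha => ?_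
    · ext a
      rw [Finset.mem_Ico, Finset.mem_filter, Finset.mem_range, zigRel, if_pos (by omega)]
      omega
    · rw [chainGF, ← Finset.sum_filter, if_neg (by omega), zero_add]
      congr 1
      refine Finset.sum_congr ?_ fun b _ => by rw [ih]
      ext b
      have := Finset.mem_range.1 (Finset.mem_filter.1 ha).1
      rw [Finset.mem_range, Finset.mem_filter, Finset.mem_range, zigRel, if_neg (by omega)]
      omega

/-- Weakly decreasing sequences that decrease by at least `δ j` at the step `j`. -/
def gapRel (δ : ℕ → ℕ) (j a b : ℕ) : Prop := b + δ j ≤ a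

theorem chainGF_gapRel_mul (q : R) {M : ℕ} (hq : q ^ M = 0) (δ : ℕ → ℕ) (N y : ℕ) :
    chainGF q M (gapRel δ) N y * ∏ j ∈ Finset.Icc 1 N, (1 - q ^ j) =
      q ^ (N * (y + δ N) + ∑ j ∈ Finset.range N, j * δ j) := by
  induction N generalizing y with
  | zero => simp [chainGF]
  | succ N ih =>
    have hI : (Finset.range M).filter (fun a => gapRel δ (N + 1) a y) =
        Finset.Ico (y + δ (N + 1)) M := by
      ext a
      rw [Finset.mem_filter, Finset.mem_range, Finset.mem_Ico, gapRel, and_comm]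
    rw [chainGF, ← Finset.sum_filter, hI, Finset.prod_Icc_succ_top (by omega), ← mul_assoc,
      Finset.sum_mul]
    have hterm : ∀ a, q ^ a * chainGF q M (gapRel δ) N a * ∏ j ∈ Finset.Icc 1 N, (1 - q ^ j) =
        (q ^ (N + 1)) ^ a * q ^ (∑ j ∈ Finset.range (N + 1), j * δ j) := by
      intro a
      rw [mul_assoc, ih, ← pow_mul, ← pow_add, ← pow_add, Finset.sum_range_succ]
      ring_nf
    simp only [hterm]
    rw [← Finset.sum_mul, mul_right_comm]
    have hgeom : (∑ a ∈ Finset.Ico (y + δ (N + 1)) M, (q ^ (N + 1)) ^ a) * (1 - q ^ (N + 1)) =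
        (q ^ (N + 1)) ^ (y + δ (N + 1)) := by
      have hqM : ∀ t, M ≤ t → (q ^ (N + 1)) ^ t = 0 := by
        intro t ht
        rw [← pow_mul]
        exact pow_eq_zero_of_le (ht.trans (Nat.le_mul_of_pos_left t (Nat.succ_pos N))) hq
      rcases le_total (y + δ (N + 1)) M with h | h
      · rw [geom_sum_Ico_mul_neg _ h, hqM M le_rfl, sub_zero]
      · rw [Finset.Ico_eq_empty (by omega), Finset.sum_empty, zero_mul, hqM _ h]
    rw [hgeom, ← pow_mul, ← pow_add]

end Chains

section Alternating

variable {R : Type*} [CommRing R]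

theorem kappaNat_mem {N j : ℕ} (h1 : 1 ≤ j) (h2 : j ≤ N) : 1 ≤ kappaNat N j ∧ kappaNat N j ≤ N := by
  unfold kappaNat
  split_ifs <;> omega

theorem kappaNat_kappaNat {N j : ℕ} : kappaNat N (kappaNat N j) = j := by
  unfold kappaNat
  split_ifs <;> omega

/-- `κ_N` as a permutation of `Fin N`. -/
def kappaPerm (N : ℕ) : Equiv.Perm (Fin N) :=
  Function.Involutive.toPerm
    (fun i => ⟨kappaNat N (i + 1) - 1, by
      have := kappaNat_mem (N := N) (j := i + 1) (by omega) (by omega)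
      omega⟩)
    fun i => by
      have := kappaNat_mem (N := N) (j := i + 1) (by omega) (by omega)
      ext
      simp only
      rw [Nat.sub_add_cancel this.1, kappaNat_kappaNat]
      omega

theorem kappaPerm_val_add_one {N : ℕ} (i : Fin N) :
    (kappaPerm N i : ℕ) + 1 = kappaNat N (i + 1) := by
  have := kappaNat_mem (N := N) (j := i + 1) (by omega) (by omega)
  exact Nat.sub_add_cancel this.1

theorem word_add_one {N : ℕ} (π : Equiv.Perm (Fin N)) {i : ℕ} (h : i < N) :
    word π (i + 1) = π ⟨i, h⟩ + 1 := by
  rw [word, dif_pos (by omega)]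
  rfl

/-- The indicator function of the descents of `w`. -/
def descent {N : ℕ} (w : Equiv.Perm (Fin N)) (j : ℕ) : ℕ :=
  if j < N ∧ word w (j + 1) < word w j then 1 else 0

theorem sum_range_mul_descent (N : ℕ) (π : Equiv.Perm (Fin N)) :
    ∑ j ∈ Finset.range N, j * descent (π.symm.trans (kappaPerm N)) j = majKappaInv N π := by
  have hw : ∀ i, 1 ≤ i → i ≤ N →
      word (π.symm.trans (kappaPerm N)) i = kappaNat N (word π.symm i) := by
    intro i h1 h2
    obtain ⟨i, rfl⟩ := Nat.exists_eq_add_of_le' h1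
    rw [word_add_one _ h2, word_add_one _ h2, Equiv.trans_apply, kappaPerm_val_add_one]
  rw [majKappaInv, majW]
  symm
  refine Finset.sum_subset_zero_on_sdiff ?_ ?_ ?_
  · intro i hi
    rw [Finset.mem_Icc] at hi
    rw [Finset.mem_range]
    omega
  · intro i hi
    rw [Finset.mem_sdiff, Finset.mem_range, Finset.mem_Icc] at hi
    obtain rfl : i = 0 := by omega
    exact zero_mul _
  · intro i hi
    rw [Finset.mem_Icc] at hi
    rw [descent, hw i (by omega) (by omega), hw (i + 1) (by omega) (by omega), mul_ite, mul_one,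
      mul_zero]
    exact if_congr ⟨fun h => ⟨by omega, h⟩, fun h => h.2⟩ rfl rfl

theorem isRelChain_gapRel_iff {N M : ℕ} (w : Equiv.Perm (Fin (N + 1))) (s : Fin (N + 1) → Fin M) :
    IsRelChain (gapRel (descent w)) 0 s ↔
      StrictMono fun i => toLex (OrderDual.toDual (s i), w i) := by
  rw [Fin.strictMono_iff_lt_succ]
  have key : ∀ i : Fin N, toLex (OrderDual.toDual (s i.castSucc), w i.castSucc) <
      toLex (OrderDual.toDual (s i.succ), w i.succ) ↔
      gapRel (descent w) (i + 1) (s ⟨i, by omega⟩) (s ⟨i + 1, by omega⟩) := by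
    intro i
    rw [Prod.Lex.toLex_lt_toLex, gapRel, descent, word_add_one w (i := i + 1) (by omega),
      word_add_one w (i := i) (by omega), OrderDual.toDual_lt_toDual, OrderDual.toDual_inj]
    have hne : (w ⟨i, by omega⟩ : ℕ) ≠ w ⟨i + 1, by omega⟩ := by
      intro h
      have := congrArg Fin.val (w.injective (Fin.ext h))
      simp at this
    change (s ⟨i + 1, _⟩ < s ⟨i, _⟩ ∨ s ⟨i, _⟩ = s ⟨i + 1, _⟩ ∧ w ⟨i, _⟩ < w ⟨i + 1, _⟩) ↔ _
    rw [Fin.lt_def, Fin.lt_def, Fin.ext_iff]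
    split_ifs <;> omega
  simp only [key]
  constructor
  · intro h i
    have := h i (by omega)
    rwa [dif_pos (by omega)] at this
  · intro h i hi
    split_ifs with h'
    · exact h ⟨i, by omega⟩
    · rw [gapRel, descent, if_neg (by omega)]
      exact Nat.zero_le _

/-- The order in which a permutation compatible with the zigzag `σ` sorts the positions. -/
def sortKey {N M : ℕ} (σ : Fin N → Fin M) (p : Fin N) : (Fin M)ᵒᵈ ×ₗ Fin N :=
  toLex (OrderDual.toDual (σ p), kappaPerm N p)

theorem sortKey_injective {N M : ℕ} (σ : Fin N → Fin M) : Function.Injective (sortKey σ) := by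
  intro p p' h
  exact (kappaPerm N).injective (congrArg (fun x => (ofLex x).2) h)

theorem existsUnique_strictMono_sortKey {N M : ℕ} (σ : Fin N → Fin M) :
    ∃! π : Equiv.Perm (Fin N), StrictMono (sortKey σ ∘ π.symm) := by
  refine ⟨(Tuple.sort (sortKey σ)).symm, ?_, fun π h => ?_⟩
  · exact (Tuple.monotone_sort (sortKey σ)).strictMono_of_injective
      ((sortKey_injective σ).comp (Equiv.injective _))
  · have := Tuple.unique_monotone h.monotone (Tuple.monotone_sort (sortKey σ))
    have h2 : π.symm = Tuple.sort (sortKey σ) :=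
      Equiv.ext fun i => sortKey_injective σ (congrFun this i)
    rw [← h2, Equiv.symm_symm]

theorem isRelChain_zigRel_iff {m M : ℕ} (σ : Fin (2 * m + 1) → Fin M)
    (π : Equiv.Perm (Fin (2 * m + 1))) (h : StrictMono (sortKey σ ∘ π.symm)) :
    IsRelChain zigRel 0 σ ↔ π ∈ altPerms (2 * m + 1) := by
  have hlt : ∀ p p', π p < π p' ↔ σ p' < σ p ∨ σ p = σ p' ∧ kappaPerm _ p < kappaPerm _ p' := by
    intro p p'
    rw [← h.lt_iff_lt, Function.comp, Function.comp, Equiv.symm_apply_apply,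
      Equiv.symm_apply_apply, sortKey, sortKey, Prod.Lex.toLex_lt_toLex,
      OrderDual.toDual_lt_toDual, OrderDual.toDual_inj]
  have hstep : ∀ i (hi : i + 1 < 2 * m + 1),
      zigRel (i + 1) (σ ⟨i, by omega⟩) (σ ⟨i + 1, hi⟩) ↔
      (((i + 1) % 2 = 1 → word π (i + 1) < word π (i + 1 + 1)) ∧
        ((i + 1) % 2 = 0 → word π (i + 1 + 1) < word π (i + 1))) := by
    intro i hi
    rw [word_add_one π hi, word_add_one π (i := i) (by omega), Nat.add_lt_add_iff_right,
      Nat.add_lt_add_iff_right, ← Fin.lt_def, ← Fin.lt_def, hlt, hlt, zigRel]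
    have h1 := kappaPerm_val_add_one (N := 2 * m + 1) ⟨i, by omega⟩
    have h2 := kappaPerm_val_add_one (N := 2 * m + 1) ⟨i + 1, hi⟩
    simp only [kappaNat] at h1 h2
    simp only [Fin.lt_def, Fin.ext_iff]
    split_ifs at h1 h2 ⊢ <;> omega
  rw [altPerms, Finset.mem_filter, IsAltW]
  simp only [Finset.mem_univ, true_and]
  constructor
  · intro hz i hi
    rw [Finset.mem_Icc] at hi
    obtain ⟨i, rfl⟩ := Nat.exists_eq_add_of_le' hi.1
    have := hz i (by omega)
    rw [dif_pos (by omega)] at this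
    exact (hstep i (by omega)).1 this
  · intro ha i hi
    split_ifs with h'
    · exact (hstep i h').2 (ha (i + 1) (Finset.mem_Icc.2 (by omega)))
    · rw [zigRel, if_pos (by omega)]
      exact Nat.zero_le _

theorem pathGF_mul_prod (q : R) {M : ℕ} (hq : q ^ M = 0) (m : ℕ) :
    pathGF q M (m + 1) 0 0 * ∏ j ∈ Finset.Icc 1 (2 * m + 1), (1 - q ^ j) =
      ∑ π ∈ altPerms (2 * m + 1), q ^ majKappaInv (2 * m + 1) π := by
  have hone : ∀ σ : Fin (2 * m + 1) → Fin M,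
      (if IsRelChain zigRel 0 σ then q ^ ∑ i, (σ i : ℕ) else 0) =
      ∑ π : Equiv.Perm (Fin (2 * m + 1)), if StrictMono (sortKey σ ∘ π.symm) then
        (if π ∈ altPerms (2 * m + 1) then q ^ ∑ i, (σ i : ℕ) else 0) else 0 := by
    intro σ
    obtain ⟨π, hπ, huniq⟩ := existsUnique_strictMono_sortKey σ
    rw [Finset.sum_eq_single π, if_pos hπ]
    · exact if_congr (isRelChain_zigRel_iff σ π hπ) rfl rfl
    · exact fun π' _ hne => if_neg fun h => hne (huniq π' h)
    · exact fun h => absurd (Finset.mem_univ _) h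
  rw [pathGF_eq_chainGF, chainGF_eq_sum, Finset.sum_congr rfl fun σ _ => hone σ,
    Finset.sum_comm, Finset.sum_mul, ← Finset.sum_subset (Finset.subset_univ (altPerms _))]
  · refine Finset.sum_congr rfl fun π hπ => ?_
    rw [← sum_range_mul_descent]
    have hN := chainGF_gapRel_mul q hq (descent (π.symm.trans (kappaPerm _))) (2 * m + 1) 0
    have hzero : descent (π.symm.trans (kappaPerm _)) (2 * m + 1) = 0 :=
      if_neg fun h => absurd h.1 (lt_irrefl _)
    rw [hzero, add_zero, mul_zero, zero_add] at hN
    rw [← hN, chainGF_eq_sum, ← (Equiv.arrowCongr π.symm (Equiv.refl (Fin M))).sum_comp]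
    congr 1
    refine Finset.sum_congr rfl fun s _ => ?_
    rw [if_pos hπ]
    refine if_congr ?_ ?_ rfl
    · rw [isRelChain_gapRel_iff]
      have : sortKey (Equiv.arrowCongr π.symm (Equiv.refl (Fin M)) s) ∘ π.symm =
          fun i => toLex (OrderDual.toDual (s i), (π.symm.trans (kappaPerm _)) i) := by
        ext i
        simp [sortKey]
      rw [this]
    · congr 1
      exact Equiv.sum_comp π fun i => (s i : ℕ)
  · intro π _ hπ
    rw [Finset.sum_mul]
    exact Finset.sum_eq_zero fun σ _ => by rw [if_neg hπ, ite_self, zero_mul]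

end Alternating

section Conclusion

theorem map_pathGF {R S : Type*} [CommRing R] [CommRing S] (f : R →+* S) (q : R) (M s r y : ℕ) :
    f (pathGF q M s r y) = pathGF (f q) M s r y := by
  induction s generalizing y with
  | zero => exact map_zero f
  | succ s ih =>
    simp only [pathGF_succ, map_sum, map_mul, map_pow, map_add, ih, apply_ite f, map_one, map_zero]

theorem pochPS_mul_inv (N : ℕ) : pochPS N * (pochPS N)⁻¹ = 1 := by
  refine PowerSeries.mul_inv_cancel _ ?_
  rw [pochPS, map_prod, Finset.prod_eq_one]
  · exact one_ne_zero
  · intro i hi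
    rw [Finset.mem_Icc] at hi
    simp [show i ≠ 0 by omega]

theorem map_estarEntry {S : Type*} [CommRing S] (f : PowerSeries ℚ →+* S) {M : ℕ}
    (hf : f PowerSeries.X ^ M = 0) (m : ℕ) :
    f (EstarEntry (2 * m + 1)) = pathGF (f PowerSeries.X) M (m + 1) 0 0 := by
  have h := pathGF_mul_prod (f PowerSeries.X) hf m
  have hE : f (EstarPS (2 * m + 1)) = ∑ π ∈ altPerms (2 * m + 1),
      f PowerSeries.X ^ majKappaInv (2 * m + 1) π := by
    simp only [EstarPS, map_sum, map_pow]
  have hP : f (pochPS (2 * m + 1)) = ∏ j ∈ Finset.Icc 1 (2 * m + 1), (1 - f PowerSeries.X ^ j) := by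
    simp only [pochPS, map_prod, map_sub, map_one, map_pow]
  rw [EstarEntry, if_neg (by omega), show (2 * (m : ℤ) + 1).toNat = 2 * m + 1 by omega, map_mul,
    hE, ← h, ← hP, mul_assoc, ← map_mul, pochPS_mul_inv, map_one, mul_one]

theorem map_det_estarEntry {S : Type*} [CommRing S] (f : PowerSeries ℚ →+* S) {n k M : ℕ}
    (hk : 0 < k) (hf : f PowerSeries.X ^ M = 0) :
    f (Matrix.of fun i j : Fin (n + k) =>
        EstarEntry (2 * ((i : ℕ) + 1) +
          2 * (if n < (j : ℕ) + 1 then ((j : ℕ) : ℤ) - (n : ℤ) else -(((j : ℕ) : ℤ) + 1)) +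
          1)).det =
      f (stateMat (PowerSeries.X : PowerSeries ℚ) M n k (n + 2 * k) 0).det := by
  rw [← Matrix.det_transpose (stateMat _ _ _ _ _ _), ← Matrix.det_submatrix_equiv_self Fin.revPerm
    (stateMat _ _ _ _ _ _).transpose, RingHom.map_det, RingHom.map_det]
  congr 1
  ext i j
  rw [RingHom.mapMatrix_apply, RingHom.mapMatrix_apply, Matrix.map_apply, Matrix.map_apply,
    Matrix.submatrix_apply, Matrix.transpose_apply, stateMat, Matrix.of_apply, Matrix.of_apply,
    if_neg (show ¬ n + 2 * k ≤ ((Fin.revPerm j : Fin (n + k)) : ℕ) by omega),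
    min_eq_right (killTime_le _), map_pathGF]
  have hi : ((Fin.revPerm i : Fin (n + k)) : ℕ) = n + k - (i + 1) := Fin.val_rev i
  have hj : ((Fin.revPerm j : Fin (n + k)) : ℕ) = n + k - (j + 1) := Fin.val_rev j
  rw [hi, hj, Pi.zero_apply]
  have hentry : ∀ (z : ℤ) (s r : ℕ), z = s - r - 1 →
      f (EstarEntry (2 * z + 1)) = pathGF (f PowerSeries.X) M s r 0 := by
    intro z s r hz
    rcases lt_or_ge r s with h | h
    · obtain ⟨m, rfl⟩ := Nat.exists_eq_add_of_lt h
      rw [show r + m + 1 = m + 1 + r by omega, pathGF_add, ← map_estarEntry f hf m]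
      congr 3
      omega
    · rw [pathGF_eq_zero _ _ h, EstarEntry, if_pos (by omega), map_zero]
  rw [← mul_add]
  refine hentry _ _ _ ?_
  rw [killTime]
  split_ifs <;> omega

end Conclusion

theorem statement_19 (n k : ℕ) (hn : 0 < n) (hk : 0 < k) :
    (PowerSeries.X : PowerSeries ℚ) ^ (k * (k + 1) * (6 * n + 8 * k + 1) / 6) *
        rppGF (deltaCells (n + 2 * k + 1) \ deltaCells n) =
      (Matrix.of fun i j : Fin (n + k) =>
        EstarEntry (2 * ((i : ℕ) + 1) +
          2 * (if n < (j : ℕ) + 1 then ((j : ℕ) : ℤ) - (n : ℤ) else -(((j : ℕ) : ℤ) + 1)) +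
          1)).det := by
  rw [← sub_eq_zero]
  ext d
  rw [map_zero]
  refine PowerSeries.X_pow_dvd_iff.1 ?_ d (Nat.lt_succ_self d)
  rw [← Ideal.mem_span_singleton, ← Ideal.Quotient.eq_zero_iff_mem, map_sub, map_det_estarEntry _ hk,
    ← map_sub, Ideal.Quotient.eq_zero_iff_mem, Ideal.mem_span_singleton]
  · exact X_pow_dvd_sub_det_stateMat hn hk (Nat.succ_pos d)
  · rw [← map_pow, Ideal.Quotient.eq_zero_iff_mem]
    exact Ideal.mem_span_singleton_self _

end Paper
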